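/- Let p be a prime and X an indecomposable finite cycle set with |X| = p². Then X is isomorphic to a cycle set of one of the following forms: (1) ℤ_{p²} with x·y = y+1; (2) ℤ_p × ℤ_p with (a,x)·(b,y) = (b+1, y + χ₀(b)·S + Φ(b−a)), where Φ : ℤ_p → ℤ_p is a non-constant map with Φ(0) = 0 and S ∈ ℤ_p; (3) ℤ_p × ℤ_p with (a,x)·(b,y) = (αb + αx, αy + αΦ(b−a)), where Φ : ℤ_p → ℤ_p is a non-constant map with Φ(A) = Φ(−A) for all A ∈ ℤ_p and α ∈ ℤ_p ∖ {0} satisfies Φ(αA) = αΦ(A) for all A ∈ ℤ_p. -/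

import Mathlib

/-- A (non-degenerate) cycle set: a set with a binary operation satisfying
(C1) `(x·y)·(x·z) = (y·x)·(y·z)`, (C2) each left translation is bijective and
(C3) the square map `x ↦ x·x` is bijective. -/
structure CycleSet (X : Type*) where
  op : X → X → X
  c1 : ∀ x y z : X, op (op x y) (op x z) = op (op y x) (op y z)
  c2 : ∀ x : X, Function.Bijective (op x)
  c3 : Function.Bijective (fun x : X => op x x)

namespace CycleSet

variable {X Y : Type*}

/-- The permutation `σ_x : y ↦ x·y`. -/
noncomputable def sigma (C : CycleSet X) (x : X) : Equiv.Perm X :=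
  Equiv.ofBijective (C.op x) (C.c2 x)

/-- The permutation group `𝒢(X)` generated by all `σ_x`. -/
noncomputable def permGroup (C : CycleSet X) : Subgroup (Equiv.Perm X) :=
  Subgroup.closure (Set.range C.sigma)

/-- A cycle set is indecomposable if `𝒢(X)` acts transitively on `X`. -/
def Indecomposable (C : CycleSet X) : Prop :=
  ∀ x y : X, ∃ g ∈ C.permGroup, g x = y

/-- A cycle set is irretractable if `σ_x = σ_y` implies `x = y`. -/
def Irretractable (C : CycleSet X) : Prop :=
  ∀ x y : X, C.op x = C.op y → x = y

/-- `f` is an isomorphism of cycle sets from `C` to `D`. -/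
def IsIso (C : CycleSet X) (D : CycleSet Y) (f : X → Y) : Prop :=
  Function.Bijective f ∧ ∀ x y : X, f (C.op x y) = D.op (f x) (f y)

/-- Two cycle sets are isomorphic if there is an isomorphism between them. -/
def Iso (C : CycleSet X) (D : CycleSet Y) : Prop :=
  ∃ f : X → Y, C.IsIso D f

end CycleSet

open Equiv

namespace CycleSet

section Brace
variable {X : Type*}

lemma sigma_apply (C : CycleSet X) (x y : X) : C.sigma x y = C.op x y := rfl

lemma sigma_comm (C : CycleSet X) (x y : X) :
    C.sigma (C.op x y) * C.sigma x = C.sigma (C.op y x) * C.sigma y := by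
  ext z
  exact C.c1 x y z

noncomputable def stepF (C : CycleSet X) (x : X) (g : Perm X) : Perm X := C.sigma (g x) * g

instance stepF_lc (C : CycleSet X) : LeftCommutative (stepF C) where
  left_comm x y g := by
    simp only [stepF, Perm.mul_apply, sigma_apply, ← mul_assoc]
    rw [sigma_comm]

noncomputable def SS (C : CycleSet X) (a : Multiset X) : Perm X := a.foldr (stepF C) 1

lemma SS_zero (C : CycleSet X) : C.SS 0 = 1 := rfl

lemma SS_cons (C : CycleSet X) (x : X) (a : Multiset X) :
    C.SS (x ::ₘ a) = C.sigma (C.SS a x) * C.SS a := by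
  simp [SS, stepF]

lemma SS_add (C : CycleSet X) (a b : Multiset X) :
    C.SS (a + b) = C.SS (b.map (C.SS a)) * C.SS a := by
  induction b using Multiset.induction with
  | empty => simp [SS_zero]
  | cons x b ih =>
    rw [Multiset.add_cons, SS_cons, ih, Multiset.map_cons, SS_cons]
    simp [mul_assoc]

lemma SS_map (C : CycleSet X) (a b : Multiset X) :
    C.SS (b.map (C.SS a)) = C.SS (a + b) * (C.SS a)⁻¹ := by
  rw [SS_add]; simp

lemma sigma_mem (C : CycleSet X) (x : X) : C.sigma x ∈ C.permGroup :=
  Subgroup.subset_closure ⟨x, rfl⟩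

lemma SS_mem (C : CycleSet X) (a : Multiset X) : C.SS a ∈ C.permGroup := by
  induction a using Multiset.induction with
  | empty => exact one_mem _
  | cons x b ih => rw [SS_cons]; exact mul_mem (C.sigma_mem _) ih

lemma exists_SS [Finite X] (C : CycleSet X) {g : Perm X} (hg : g ∈ C.permGroup) :
    ∃ a, C.SS a = g := by
  have hg' : g ∈ Submonoid.closure (Set.range C.sigma) := by
    rw [← Subgroup.closure_toSubmonoid_of_finite]; exact hg
  induction hg' using Submonoid.closure_induction_left with
  | one => exact ⟨0, rfl⟩
  | mul_left x hx y hy ih =>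
    obtain ⟨u, rfl⟩ := hx
    have hy' : y ∈ C.permGroup := by
      have := mul_mem (inv_mem (C.sigma_mem u)) hg
      simpa using this
    obtain ⟨a, rfl⟩ := ih hy'
    refine ⟨(C.SS a)⁻¹ u ::ₘ a, ?_⟩
    rw [SS_cons]; simp

def con (C : CycleSet X) : AddCon (Multiset X) where
  r a b := C.SS a = C.SS b
  iseqv := ⟨fun _ => rfl, fun h => h.symm, fun h h' => h.trans h'⟩
  add' := by
    intro a b c d h h'
    change C.SS (a + c) = C.SS (b + d)
    rw [SS_add, h, ← SS_add, add_comm b c, add_comm b d, SS_add, h', ← SS_add]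

def Q (C : CycleSet X) : Type _ := C.con.Quotient

instance (C : CycleSet X) : AddCommMonoid C.Q := inferInstanceAs (AddCommMonoid C.con.Quotient)

def mkQ (C : CycleSet X) : Multiset X →+ C.Q := AddCon.mk' C.con

lemma mkQ_eq (C : CycleSet X) {a b : Multiset X} : C.mkQ a = C.mkQ b ↔ C.SS a = C.SS b :=
  AddCon.eq C.con

lemma mkQ_surj (C : CycleSet X) : Function.Surjective C.mkQ := AddCon.mk'_surjective

noncomputable def psi (C : CycleSet X) (q : C.Q) : C.permGroup :=
  AddCon.liftOn q (fun a => ⟨C.SS a, C.SS_mem a⟩) (fun _ _ h => Subtype.ext h)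

lemma psi_mk (C : CycleSet X) (a : Multiset X) : C.psi (C.mkQ a) = ⟨C.SS a, C.SS_mem a⟩ := rfl

lemma psi_inj (C : CycleSet X) : Function.Injective C.psi := by
  intro q r h
  obtain ⟨a, rfl⟩ := C.mkQ_surj q
  obtain ⟨b, rfl⟩ := C.mkQ_surj r
  rw [mkQ_eq]
  simpa [psi_mk] using h

lemma psi_surj [Finite X] (C : CycleSet X) : Function.Surjective C.psi := by
  rintro ⟨g, hg⟩
  obtain ⟨a, rfl⟩ := C.exists_SS hg
  exact ⟨C.mkQ a, rfl⟩

noncomputable def iota (C : CycleSet X) (x : X) : C.Q := C.mkQ {x}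

lemma psi_iota (C : CycleSet X) (x : X) : (C.psi (C.iota x) : Perm X) = C.sigma x := by
  rw [iota, psi_mk]
  change C.SS (x ::ₘ 0) = _
  rw [SS_cons, SS_zero]; simp

lemma psi_zero (C : CycleSet X) : C.psi 0 = 1 := rfl

lemma Q_induction (C : CycleSet X) {P : C.Q → Prop} (h0 : P 0)
    (h1 : ∀ q x, P q → P (q + C.iota x)) (q : C.Q) : P q := by
  obtain ⟨a, rfl⟩ := C.mkQ_surj q
  induction a using Multiset.induction with
  | empty => exact h0
  | cons x a ih =>
    have : C.mkQ (x ::ₘ a) = C.mkQ a + C.iota x := by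
      rw [iota, ← map_add, add_comm]; rfl
    rw [this]; exact h1 _ _ ih

variable [Finite X]

noncomputable instance (C : CycleSet X) : MulAction C.permGroup C.Q where
  smul g q := AddCon.liftOn q (fun a => C.mkQ (a.map g.1)) (by
    intro a b h
    rw [mkQ_eq]
    obtain ⟨c, hc⟩ := C.exists_SS g.2
    have h' : C.SS a = C.SS b := h
    rw [← hc, SS_map, SS_map, add_comm c a, add_comm c b, SS_add, h', ← SS_add])
  one_smul q := by
    obtain ⟨a, rfl⟩ := C.mkQ_surj q
    change C.mkQ (a.map id) = C.mkQ a
    simp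
  mul_smul g h q := by
    obtain ⟨a, rfl⟩ := C.mkQ_surj q
    change C.mkQ (a.map _) = C.mkQ ((a.map _).map _)
    simp

lemma smul_mk (C : CycleSet X) (g : C.permGroup) (a : Multiset X) :
    g • C.mkQ a = C.mkQ (a.map g.1) := rfl

noncomputable instance (C : CycleSet X) : DistribMulAction C.permGroup C.Q where
  smul_zero g := rfl
  smul_add g q r := by
    obtain ⟨a, rfl⟩ := C.mkQ_surj q
    obtain ⟨b, rfl⟩ := C.mkQ_surj r
    rw [← map_add, smul_mk, smul_mk, smul_mk, Multiset.map_add, map_add]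

lemma smul_iota (C : CycleSet X) (g : C.permGroup) (x : X) :
    g • C.iota x = C.iota (g.1 x) := by
  rw [iota, smul_mk]; simp [iota]

lemma psi_add (C : CycleSet X) (q r : C.Q) :
    C.psi (q + r) = C.psi (C.psi q • r) * C.psi q := by
  obtain ⟨a, rfl⟩ := C.mkQ_surj q
  obtain ⟨b, rfl⟩ := C.mkQ_surj r
  apply Subtype.ext
  rw [← map_add, psi_mk, psi_mk, smul_mk, psi_mk]
  exact C.SS_add a b

instance (C : CycleSet X) : Finite C.Q := Finite.of_injective C.psi C.psi_inj

lemma Q_cancel (C : CycleSet X) (q r s : C.Q) (h : q + r = q + s) : r = s := by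
  have := congrArg C.psi h
  rw [psi_add, psi_add, mul_left_inj] at this
  exact smul_left_cancel _ (C.psi_inj this)

lemma Q_exists_neg (C : CycleSet X) (q : C.Q) : ∃ r, r + q = 0 := by
  have hsurj : Function.Surjective (fun r => q + r) :=
    Finite.surjective_of_injective (fun r s h => C.Q_cancel q r s h)
  obtain ⟨r, hr⟩ := hsurj 0
  exact ⟨r, by rw [add_comm]; exact hr⟩

noncomputable instance (C : CycleSet X) : Neg C.Q := ⟨fun q => (C.Q_exists_neg q).choose⟩

noncomputable instance (C : CycleSet X) : AddCommGroup C.Q :=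
  { (inferInstance : AddCommMonoid C.Q) with
    zsmul := zsmulRec
    neg_add_cancel := fun q => (C.Q_exists_neg q).choose_spec }

lemma card_Q (C : CycleSet X) : Nat.card C.Q = Nat.card C.permGroup :=
  Nat.card_eq_of_bijective C.psi ⟨C.psi_inj, C.psi_surj⟩

/-- Fixed elements give automorphisms. -/
lemma exists_fix {p : ℕ} [Fact p.Prime] (C : CycleSet X) (hG : IsPGroup p C.permGroup)
    (B : AddSubgroup C.Q) (hB : B ≠ ⊥) (hinv : ∀ (g : C.permGroup) q, q ∈ B → g • q ∈ B) :
    ∃ q ∈ B, C.psi q ≠ 1 ∧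
      ∀ u, C.sigma ((C.psi q : Perm X) u) * (C.psi q : Perm X) = (C.psi q : Perm X) * C.sigma u := by
  let _ : MulAction C.permGroup B :=
    { smul := fun g q => ⟨g • q.1, hinv g q.1 q.2⟩
      one_smul := fun q => Subtype.ext (one_smul _ _)
      mul_smul := fun g h q => Subtype.ext (mul_smul _ _ _) }
  obtain ⟨k, hk⟩ := IsPGroup.iff_card.mp hG
  have hdvd : Nat.card B ∣ p ^ k := by
    rw [← hk, ← card_Q]; exact B.card_addSubgroup_dvd_card
  have hp : p ∣ Nat.card B := by
    obtain ⟨j, -, hj⟩ := (Nat.dvd_prime_pow Fact.out).mp hdvd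
    rcases j with _ | j
    · exfalso; apply hB
      rw [pow_zero] at hj
      exact AddSubgroup.card_eq_one.mp hj
    · rw [hj]; exact dvd_pow_self _ (by simp)
  have h0 : (0 : B) ∈ MulAction.fixedPoints C.permGroup B := by
    intro g; apply Subtype.ext; exact smul_zero g
  obtain ⟨q, hq, hne⟩ := hG.exists_fixed_point_of_prime_dvd_card_of_fixed_point B hp h0
  have hfix : ∀ g : C.permGroup, g • q.1 = q.1 := fun g => congrArg Subtype.val (hq g)
  refine ⟨q.1, q.2, ?_, ?_⟩
  · intro h
    apply hne
    apply Subtype.ext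
    exact (C.psi_inj (h.trans C.psi_zero.symm)).symm
  · intro u
    have h1 := C.psi_add q.1 (C.iota u)
    rw [smul_iota] at h1
    have h2 := C.psi_add (C.iota u) q.1
    rw [hfix, add_comm, h1] at h2
    have := congrArg Subtype.val h2
    simpa [psi_iota] using this

end Brace
end CycleSet


namespace CycleSet

section Cable
variable {X : Type*} [Finite X]

lemma psi_mul (C : CycleSet X) (q r : C.Q) :
    C.psi r * C.psi q = C.psi (q + (C.psi q)⁻¹ • r) := by
  rw [psi_add, smul_inv_smul]

lemma psi_inv (C : CycleSet X) (q : C.Q) : (C.psi q)⁻¹ = C.psi (-(C.psi q • q)) := by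
  rw [inv_eq_iff_mul_eq_one, mul_eq_one_iff_eq_inv, eq_comm, inv_eq_iff_mul_eq_one, psi_mul,
    smul_neg, inv_smul_smul, add_neg_cancel, psi_zero]

lemma smul_nsmul' (C : CycleSet X) (g : C.permGroup) (n : ℕ) (q : C.Q) :
    g • (n • q) = n • (g • q) := map_nsmul (DistribSMul.toAddMonoidHom C.Q g) n q

lemma psi_nsmul_add_iota (C : CycleSet X) (q : C.Q) (n : ℕ) (x : X) :
    C.psi (q + n • C.iota x) = C.psi (n • C.iota ((C.psi q : Perm X) x)) * C.psi q := by
  rw [psi_add, smul_nsmul', smul_iota]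

lemma psi_nsmul_self (C : CycleSet X) (n : ℕ) (x : X) :
    (C.psi (n • C.iota x) : Perm X) x = (fun x => C.op x x)^[n] x := by
  induction n with
  | zero => simp [psi_zero]
  | succ n ih =>
    have := C.psi_nsmul_add_iota (n • C.iota x) 1 x
    rw [one_smul, one_smul] at this
    rw [add_smul, one_smul, this, Subgroup.coe_mul, Perm.mul_apply, ih, psi_iota, sigma_apply,
      Function.iterate_succ_apply']

noncomputable def cable (C : CycleSet X) (n : ℕ) : CycleSet X where
  op x y := (C.psi (n • C.iota x) : Perm X) y
  c1 x y z := by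
    have h1 := C.psi_nsmul_add_iota (n • C.iota x) n y
    have h2 := C.psi_nsmul_add_iota (n • C.iota y) n x
    rw [add_comm, h1] at h2
    have := congrArg (fun g : C.permGroup => (g : Perm X) z) h2
    simpa using this
  c2 x := Equiv.bijective _
  c3 := by
    simp only [psi_nsmul_self]
    exact C.c3.iterate n

lemma cable_sigma (C : CycleSet X) (n : ℕ) (x : X) :
    (C.cable n).sigma x = (C.psi (n • C.iota x) : Perm X) := by
  ext y; rfl

lemma mem_cable (C : CycleSet X) (n : ℕ) (g : Perm X) :
    g ∈ (C.cable n).permGroup ↔ ∃ q, (C.psi (n • q) : Perm X) = g := by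
  constructor
  · intro hg
    induction hg using Subgroup.closure_induction with
    | mem g hg =>
      obtain ⟨x, rfl⟩ := hg
      exact ⟨C.iota x, (C.cable_sigma n x).symm⟩
    | one => exact ⟨0, by simp [psi_zero]⟩
    | mul g h _ _ hg hh =>
      obtain ⟨q, rfl⟩ := hg
      obtain ⟨r, rfl⟩ := hh
      rw [← Subgroup.coe_mul, psi_mul, smul_nsmul', ← smul_add]
      exact ⟨_, rfl⟩
    | inv g _ hg =>
      obtain ⟨q, rfl⟩ := hg
      rw [← Subgroup.coe_inv, psi_inv, smul_nsmul', ← smul_neg]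
      exact ⟨_, rfl⟩
  · rintro ⟨q, rfl⟩
    induction q using C.Q_induction with
    | h0 => rw [smul_zero, psi_zero]; exact one_mem _
    | h1 q x ih =>
      rw [smul_add, psi_nsmul_add_iota, Subgroup.coe_mul, ← cable_sigma]
      exact mul_mem (sigma_mem _ _) ih

lemma cable_le (C : CycleSet X) (n : ℕ) : (C.cable n).permGroup ≤ C.permGroup := by
  intro g hg
  obtain ⟨q, rfl⟩ := (C.mem_cable n g).mp hg
  exact (C.psi _).2

noncomputable def nmul (C : CycleSet X) (n : ℕ) : C.Q →+ C.Q := nsmulAddMonoidHom n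

lemma card_cable (C : CycleSet X) (n : ℕ) :
    Nat.card (C.cable n).permGroup = Nat.card (C.nmul n).range := by
  symm
  refine Nat.card_eq_of_bijective
    (fun q : (C.nmul n).range => (⟨(C.psi q.1 : Perm X), by
      obtain ⟨r, hr⟩ := q.2
      rw [mem_cable]
      exact ⟨r, by rw [← hr]; rfl⟩⟩ : (C.cable n).permGroup)) ⟨?_, ?_⟩
  · intro q r h
    apply Subtype.ext
    apply C.psi_inj
    apply Subtype.ext
    exact congrArg (fun g => g.1) h
  · rintro ⟨g, hg⟩
    obtain ⟨q, rfl⟩ := (C.mem_cable n g).mp hg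
    exact ⟨⟨n • q, q, rfl⟩, rfl⟩

end Cable

/-- numbers -/
lemma exists_crt {p N : ℕ} (hp : p.Prime) (hN : N ≠ 0) : ∃ k m n n' : ℕ, N = p ^ k * m ∧ ¬ p ∣ m ∧
    n ≡ 1 [MOD p ^ k] ∧ n ≡ 0 [MOD m] ∧ n' ≡ 0 [MOD p ^ k] ∧ n' ≡ 1 [MOD m] ∧ n + n' ≡ 1 [MOD N] := by
  obtain ⟨k, m, hm, rfl⟩ := Nat.exists_eq_pow_mul_and_not_dvd hN p hp.ne_one
  have hc : Nat.Coprime (p ^ k) m := Nat.Coprime.pow_left _ ((Nat.Prime.coprime_iff_not_dvd hp).mpr hm)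
  obtain ⟨n, h1, h2⟩ := Nat.chineseRemainder hc 1 0
  obtain ⟨n', h3, h4⟩ := Nat.chineseRemainder hc 0 1
  refine ⟨k, m, n, n', rfl, hm, h1, h2, h3, h4, ?_⟩
  rw [← Nat.modEq_and_modEq_iff_modEq_mul hc]
  exact ⟨by simpa using h1.add h3, by simpa using h2.add h4⟩

lemma card_eq_orbit {X : Type*} [Finite X] (G : Subgroup (Perm X)) (w : X) :
    Nat.card G = (MulAction.orbit G w).ncard *
      Nat.card (G ⊓ MulAction.stabilizer (Perm X) w : Subgroup (Perm X)) := by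
  have h1 := MulAction.index_stabilizer G w
  rw [← h1, ← Subgroup.card_mul_index (MulAction.stabilizer G w), mul_comm]
  congr 1
  refine Nat.card_congr ⟨fun g => ⟨g.1.1, g.1.2, g.2⟩, fun g => ⟨⟨g.1, g.2.1⟩, g.2.2⟩, ?_, ?_⟩
  · intro g; rfl
  · intro g; rfl

lemma not_dvd_card_of_smul {A : Type*} [AddCommGroup A] [Finite A] {p m : ℕ} (hp : p.Prime)
    (hm : ¬ p ∣ m) (h : ∀ a : A, m • a = 0) : ¬ p ∣ Nat.card A := by
  intro hd
  have := Fact.mk hp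
  obtain ⟨a, ha⟩ := exists_prime_addOrderOf_dvd_card' p hd
  exact hm (ha ▸ addOrderOf_dvd_of_nsmul_eq_zero (h a))

lemma card_of_smul {A : Type*} [AddCommGroup A] [Finite A] {p k : ℕ} [Fact p.Prime]
    (h : ∀ a : A, p ^ k • a = 0) : ∃ j, Nat.card A = p ^ j := by
  have : IsPGroup p (Multiplicative A) := fun g => ⟨k, by
    have := h (Multiplicative.toAdd g)
    exact this⟩
  obtain ⟨j, hj⟩ := IsPGroup.iff_card.mp this
  exact ⟨j, by rw [← hj]; exact Nat.card_congr Multiplicative.ofAdd⟩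

/-- decomposition into a p-part and a part of order prime to p -/
structure Dec (p : ℕ) {X : Type*} (C C' E : CycleSet X) : Prop where
  op_eq : ∀ u v, C.op u v = E.op (C'.op u u) (C'.op u v)
  comm : ∀ u v, E.sigma (C'.op u v) * C'.sigma u = C'.sigma (E.op v u) * E.sigma v
  cop : ¬ p ∣ Nat.card E.permGroup
  pgr : IsPGroup p C'.permGroup
  trans : C'.Indecomposable
  pres : ∀ f : X → ZMod p, (∀ u v, f (C'.op u v) = f v + 1) → ∀ v w, f (E.op v w) = f w

theorem exists_dec {p : ℕ} [hpF : Fact p.Prime] {X : Type*} [Finite X] (C : CycleSet X)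
    (hcard : Nat.card X = p ^ 2) (hind : C.Indecomposable) : ∃ C' E : CycleSet X, Dec p C C' E := by
  classical
  have hp : p.Prime := hpF.out
  have hN : Nat.card C.Q ≠ 0 := Nat.card_pos.ne'
  obtain ⟨k, m, n, n', hNe, hm, h1, h2, h3, h4, h5⟩ := exists_crt hp hN
  have hmod : ∀ (a b : ℕ) (q : C.Q), a ≡ b [MOD Nat.card C.Q] → a • q = b • q := by
    intro a b q h
    rw [← mod_natCard_nsmul, h, mod_natCard_nsmul]
  have hone : ∀ q : C.Q, n • q + n' • q = q := by
    intro q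
    rw [← add_smul, hmod _ _ q h5, one_smul]
  have hz : ∀ (a : ℕ) (q : C.Q), Nat.card C.Q ∣ a → a • q = 0 := by
    intro a q h
    rw [hmod a 0 q ((Nat.modEq_zero_iff_dvd).mpr h), zero_smul]
  have hpn : ∀ q : C.Q, p ^ k • n • q = 0 := by
    intro q; rw [← mul_smul]; apply hz; rw [hNe]
    exact mul_dvd_mul_left _ ((Nat.modEq_zero_iff_dvd).mp h2)
  have hmn : ∀ q : C.Q, m • n' • q = 0 := by
    intro q; rw [← mul_smul]; apply hz; rw [hNe, mul_comm]
    exact mul_dvd_mul_left _ ((Nat.modEq_zero_iff_dvd).mp h3)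
  have hcop : ¬ p ∣ Nat.card (C.cable n').permGroup := by
    rw [card_cable]
    refine not_dvd_card_of_smul hp hm ?_
    rintro ⟨_, q, rfl⟩
    exact Subtype.ext (hmn q)
  have hpg : IsPGroup p (C.cable n).permGroup := by
    rw [IsPGroup.iff_card, card_cable]
    refine card_of_smul (k := k) ?_
    rintro ⟨_, q, rfl⟩
    exact Subtype.ext (hpn q)
  obtain ⟨c, hc, hGc⟩ : ∃ c, ¬ p ∣ c ∧ Nat.card C.permGroup = c * Nat.card (C.cable n).permGroup := by
    refine ⟨Nat.card (C.nmul n).ker, ?_, ?_⟩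
    · refine not_dvd_card_of_smul hp hm ?_
      rintro ⟨q, hq⟩
      apply Subtype.ext
      have hq' : n • q = 0 := hq
      have := hone q
      rw [hq', zero_add] at this
      change m • q = 0
      rw [← this]; exact hmn q
    · rw [card_cable, ← card_Q, ← AddSubgroup.card_mul_index (C.nmul n).ker, AddSubgroup.index_ker]
  have horbC : ∀ w : X, (MulAction.orbit C.permGroup w).ncard = p ^ 2 := by
    intro w
    rw [← hcard, ← Set.ncard_univ]
    congr 1
    ext x
    simp only [Set.mem_univ, iff_true]
    obtain ⟨g, hg, h⟩ := hind w x
    exact ⟨⟨g, hg⟩, h⟩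
  -- stabilizers
  have hst : ∀ w : X, ∃ d, Nat.card (C.permGroup ⊓ MulAction.stabilizer (Perm X) w : Subgroup (Perm X))
      = d * Nat.card ((C.cable n).permGroup ⊓ MulAction.stabilizer (Perm X) w : Subgroup (Perm X)) := by
    intro w
    obtain ⟨d, hd⟩ := Subgroup.card_dvd_of_le
      (inf_le_inf_right (MulAction.stabilizer (Perm X) w) (C.cable_le n))
    exact ⟨d, by rw [hd, mul_comm]⟩
  have hkey : ∀ (w : X) (d : ℕ), Nat.card (C.permGroup ⊓ MulAction.stabilizer (Perm X) w : Subgroup (Perm X))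
      = d * Nat.card ((C.cable n).permGroup ⊓ MulAction.stabilizer (Perm X) w : Subgroup (Perm X)) →
      p ^ 2 * d = c * (MulAction.orbit (C.cable n).permGroup w).ncard := by
    intro w d hd
    have e1 := card_eq_orbit C.permGroup w
    have e2 := card_eq_orbit (C.cable n).permGroup w
    rw [horbC, hd, hGc, e2] at e1
    have hpos : 0 < Nat.card ((C.cable n).permGroup ⊓ MulAction.stabilizer (Perm X) w : Subgroup (Perm X)) :=
      Nat.card_pos
    apply Nat.eq_of_mul_eq_mul_right hpos
    rw [mul_assoc, ← e1, mul_assoc]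
  have horb : ∀ w : X, (MulAction.orbit (C.cable n).permGroup w).ncard = p ^ 2 := by
    intro w
    obtain ⟨d, hd⟩ := hst w
    have := hkey w d hd
    have hdv : p ^ 2 ∣ c * (MulAction.orbit (C.cable n).permGroup w).ncard := ⟨d, this.symm⟩
    have hcp : Nat.Coprime (p ^ 2) c := Nat.Coprime.pow_left _ ((Nat.Prime.coprime_iff_not_dvd hp).mpr hc)
    have hdv2 := hcp.dvd_of_dvd_mul_left hdv
    apply le_antisymm
    · rw [← hcard, ← Set.ncard_univ]
      exact Set.ncard_le_ncard (Set.subset_univ _)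
    · apply Nat.le_of_dvd _ hdv2
      rw [Set.ncard_pos]
      exact MulAction.nonempty_orbit w
  have htr : (C.cable n).Indecomposable := by
    intro x y
    have : MulAction.orbit (C.cable n).permGroup x = Set.univ := by
      apply Set.eq_of_subset_of_ncard_le (Set.subset_univ _)
      rw [horb, Set.ncard_univ, hcard]
    have hy : y ∈ MulAction.orbit (C.cable n).permGroup x := this ▸ Set.mem_univ y
    obtain ⟨g, hg⟩ := hy
    exact ⟨g.1, g.2, hg⟩
  refine ⟨C.cable n, C.cable n', ?_, ?_, hcop, hpg, htr, ?_⟩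
  · intro u v
    have := C.psi_nsmul_add_iota (n • C.iota u) n' u
    rw [hone] at this
    have := congrArg (fun g : C.permGroup => (g : Perm X) v) this
    simp only [psi_iota, sigma_apply, Subgroup.coe_mul, Perm.mul_apply] at this
    exact this
  · intro u v
    have e1 := C.psi_nsmul_add_iota (n • C.iota u) n' v
    have e2 := C.psi_nsmul_add_iota (n' • C.iota v) n u
    rw [add_comm, e1] at e2
    have := congrArg Subtype.val e2
    simp only [Subgroup.coe_mul] at this
    rw [cable_sigma, cable_sigma, cable_sigma, cable_sigma]
    exact this
  · intro f hf
    -- k ≥ 1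
    have : NeZero p := ⟨hp.ne_zero⟩
    have : Nonempty X := by
      have : 0 < Nat.card X := by rw [hcard]; exact pow_pos hp.pos _
      exact (Nat.card_pos_iff.mp this).1
    obtain ⟨x0⟩ := ‹Nonempty X›
    have hk : k ≠ 0 := by
      rintro rfl
      have e1 := card_eq_orbit C.permGroup x0
      rw [horbC, ← card_Q, hNe, pow_zero, one_mul] at e1
      exact hm (e1 ▸ Dvd.dvd.mul_right (dvd_pow_self p two_ne_zero) _)
    have hn1 : (n : ZMod p) = 1 := by
      have : n ≡ 1 [MOD p] := h1.of_dvd (dvd_pow_self p hk)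
      simpa using (ZMod.natCast_eq_natCast_iff _ _ _).mpr this
    have hn0 : (n' : ZMod p) = 0 := by
      have : n' ≡ 0 [MOD p] := h3.of_dvd (dvd_pow_self p hk)
      simpa using (ZMod.natCast_eq_natCast_iff _ _ _).mpr this
    -- epsilon
    have hcardm : ∀ (a : Multiset X) v, f ((C.psi (n • C.mkQ a) : Perm X) v) = f v + a.card := by
      intro a
      induction a using Multiset.induction with
      | empty => intro v; simp [psi_zero]
      | cons x a ih =>
        intro v
        have : C.mkQ (x ::ₘ a) = C.mkQ a + C.iota x := by
          rw [iota, ← map_add, add_comm]; rfl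
        rw [this, smul_add, psi_nsmul_add_iota, Subgroup.coe_mul, Perm.mul_apply, ← cable_sigma,
          sigma_apply, hf, ih]
        simp [add_assoc]
    obtain ⟨ε, hε⟩ : ∃ ε : C.Q → ZMod p, ∀ a, ε (C.mkQ a) = a.card := by
      refine ⟨fun q => f ((C.psi (n • q) : Perm X) x0) - f x0, fun a => ?_⟩
      simp only [hcardm]; ring
    have hfe : ∀ q v, f ((C.psi (n • q) : Perm X) v) = f v + ε q := by
      intro q v
      obtain ⟨a, rfl⟩ := C.mkQ_surj q
      rw [hcardm, hε]
    have hεadd : ∀ q r, ε (q + r) = ε q + ε r := by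
      intro q r
      obtain ⟨a, rfl⟩ := C.mkQ_surj q
      obtain ⟨b, rfl⟩ := C.mkQ_surj r
      rw [← map_add, hε, hε, hε]; simp
    have hεs : ∀ (g : C.permGroup) q, ε (g • q) = ε q := by
      intro g q
      obtain ⟨a, rfl⟩ := C.mkQ_surj q
      rw [smul_mk, hε, hε]; simp
    have hεn : ∀ (j : ℕ) q, ε (j • q) = j * ε q := by
      intro j q
      obtain ⟨a, rfl⟩ := C.mkQ_surj q
      rw [← map_nsmul, hε, hε]; simp
    let ev := Equiv.ofBijective C.psi ⟨C.psi_inj, C.psi_surj⟩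
    have hev : ∀ q, ev.symm (C.psi q) = q := fun q => ev.symm_apply_apply q
    let φ : C.permGroup →* Multiplicative (ZMod p) :=
      MonoidHom.mk' (fun g => Multiplicative.ofAdd (ε (ev.symm g))) (by
        intro g h
        obtain ⟨q, rfl⟩ := C.psi_surj h
        obtain ⟨r, rfl⟩ := C.psi_surj g
        rw [psi_mul, hev, hev, hev, hεadd, hεs, add_comm]; rfl)
    have hφ : ∀ q, φ (C.psi q) = Multiplicative.ofAdd (ε q) := by
      intro q
      change Multiplicative.ofAdd (ε (ev.symm (C.psi q))) = _
      rw [hev]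
    have hstab : ∀ (w : X) (g : C.permGroup), (g : Perm X) w = w → φ g = 1 := by
      intro w
      obtain ⟨d, hd⟩ := hst w
      have hkd := hkey w d hd
      rw [horb, mul_comm] at hkd
      have hdc : d = c := Nat.eq_of_mul_eq_mul_right (pow_pos hp.pos 2) hkd
      let S : Subgroup C.permGroup := MulAction.stabilizer C.permGroup w
      let K : Subgroup S := (((C.cable n).permGroup.subgroupOf C.permGroup)).subgroupOf S
      have hcS : Nat.card S = Nat.card (C.permGroup ⊓ MulAction.stabilizer (Perm X) w : Subgroup (Perm X)) :=
        Nat.card_congr ⟨fun g => ⟨g.1.1, g.1.2, g.2⟩, fun g => ⟨⟨g.1, g.2.1⟩, g.2.2⟩,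
          fun g => rfl, fun g => rfl⟩
      have hcK : Nat.card K = Nat.card ((C.cable n).permGroup ⊓ MulAction.stabilizer (Perm X) w : Subgroup (Perm X)) :=
        Nat.card_congr ⟨fun g => ⟨g.1.1.1, g.2, g.1.2⟩,
          fun g => ⟨⟨⟨g.1, C.cable_le n g.2.1⟩, g.2.2⟩, g.2.1⟩, fun g => rfl, fun g => rfl⟩
      have hKi : K.index = c := by
        have := K.card_mul_index
        rw [hcS, hd, ← hcK, mul_comm, hdc] at this
        exact Nat.eq_of_mul_eq_mul_right Nat.card_pos this
      let φS : S →* Multiplicative (ZMod p) := φ.comp S.subtype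
      have hK : K ≤ φS.ker := by
        rintro ⟨⟨g, hg⟩, hgw⟩ hgK
        have hgK' : g ∈ (C.cable n).permGroup := hgK
        obtain ⟨q, hq⟩ := (C.mem_cable n g).mp hgK'
        have hgq : (⟨g, hg⟩ : C.permGroup) = C.psi (n • q) := Subtype.ext hq.symm
        rw [MonoidHom.mem_ker]
        change φ ⟨g, hg⟩ = 1
        have hgw' : g w = w := hgw
        have := hfe q w
        rw [hq, hgw'] at this
        rw [hgq, hφ, hεn, hn1, one_mul]
        rw [left_eq_add] at this
        rw [this]; rfl
      have hi := Subgroup.index_dvd_of_le hK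
      rw [hKi, Subgroup.index_ker] at hi
      have hcr : Nat.card φS.range ∣ p := by
        have := φS.range.card_subgroup_dvd_card
        rwa [Nat.card_congr Multiplicative.toAdd, Nat.card_zmod] at this
      have hcr1 : Nat.card φS.range = 1 := by
        rcases (Nat.dvd_prime hp).mp hcr with h | h
        · exact h
        · exact absurd (h ▸ hi) hc
      have hbot := Subgroup.card_eq_one.mp hcr1
      intro g hg
      have : φS ⟨g, hg⟩ ∈ φS.range := ⟨_, rfl⟩
      rw [hbot, Subgroup.mem_bot] at this
      exact this
    intro v w
    change f ((C.psi (n' • C.iota v) : Perm X) w) = f w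
    obtain ⟨g, hg, hgw⟩ := htr w ((C.psi (n' • C.iota v) : Perm X) w)
    obtain ⟨q, rfl⟩ := (C.mem_cable n g).mp hg
    have hs := hstab w ((C.psi (n' • C.iota v))⁻¹ * C.psi (n • q)) (by
      rw [Subgroup.coe_mul, Perm.mul_apply, hgw, Subgroup.coe_inv]; simp)
    rw [map_mul, map_inv, inv_mul_eq_one, hφ, hφ, hεn, hεn, hn0, hn1, zero_mul, one_mul] at hs
    have hs' : 0 = ε q := Multiplicative.ofAdd.injective hs
    rw [← hgw, hfe, ← hs', add_zero]

end CycleSet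


namespace CycleSet

section Transport
variable {X Y : Type*}

def tr (C : CycleSet X) (e : X ≃ Y) : CycleSet Y where
  op u v := e (C.op (e.symm u) (e.symm v))
  c1 x y z := by simp [C.c1 (e.symm x) (e.symm y) (e.symm z)]
  c2 x := e.bijective.comp ((C.c2 _).comp e.symm.bijective)
  c3 := e.bijective.comp (C.c3.comp e.symm.bijective)

lemma tr_op (C : CycleSet X) (e : X ≃ Y) (u v : Y) :
    (C.tr e).op u v = e (C.op (e.symm u) (e.symm v)) := rfl

lemma iso_tr (C : CycleSet X) (e : X ≃ Y) : C.Iso (C.tr e) :=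
  ⟨e, e.bijective, fun x y => by simp [tr_op]⟩

lemma iso_of_eq (C : CycleSet X) (e : X ≃ Y) (D : CycleSet Y)
    (h : ∀ x y, e (C.op x y) = D.op (e x) (e y)) : C.Iso D := ⟨e, e.bijective, h⟩

lemma Iso.trans' {Z : Type*} {C : CycleSet X} {D : CycleSet Y} {E : CycleSet Z}
    (h : C.Iso D) (h' : D.Iso E) : C.Iso E := by
  obtain ⟨f, hf, hf'⟩ := h
  obtain ⟨g, hg, hg'⟩ := h'
  exact ⟨g ∘ f, hg.comp hf, fun x y => by simp [hf', hg']⟩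

lemma tr_sigma (C : CycleSet X) (e : X ≃ Y) (u : Y) :
    (C.tr e).sigma u = e.permCongrHom (C.sigma (e.symm u)) := by
  ext v; rfl

lemma tr_permGroup (C : CycleSet X) (e : X ≃ Y) :
    (C.tr e).permGroup = C.permGroup.map e.permCongrHom.toMonoidHom := by
  unfold permGroup
  rw [MonoidHom.map_closure]
  congr 1
  ext g
  constructor
  · rintro ⟨u, rfl⟩
    exact ⟨_, ⟨e.symm u, rfl⟩, (C.tr_sigma e u).symm⟩
  · rintro ⟨_, ⟨u, rfl⟩, rfl⟩
    refine ⟨e u, ?_⟩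
    rw [tr_sigma]; simp

lemma mem_tr (C : CycleSet X) (e : X ≃ Y) {g : Perm X} (hg : g ∈ C.permGroup) :
    e.permCongrHom g ∈ (C.tr e).permGroup := by
  rw [tr_permGroup]; exact ⟨g, hg, rfl⟩

lemma tr_ind (C : CycleSet X) (e : X ≃ Y) (h : C.Indecomposable) : (C.tr e).Indecomposable := by
  intro x y
  obtain ⟨g, hg, hxy⟩ := h (e.symm x) (e.symm y)
  refine ⟨_, C.mem_tr e hg, ?_⟩
  change e (g (e.symm x)) = y
  rw [hxy]; simp

lemma tr_pgr {p : ℕ} (C : CycleSet X) (e : X ≃ Y) (h : IsPGroup p C.permGroup) :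
    IsPGroup p (C.tr e).permGroup := by
  rw [tr_permGroup]; exact h.map _

lemma Dec.tr {p : ℕ} {C C' E : CycleSet X} (h : Dec p C C' E) (e : X ≃ Y) :
    Dec p (C.tr e) (C'.tr e) (E.tr e) where
  op_eq u v := by simp [tr_op, h.op_eq]
  comm u v := by
    ext w
    have := congrArg (fun g : Perm X => g (e.symm w)) (h.comm (e.symm u) (e.symm v))
    simp only [Perm.mul_apply, sigma_apply] at this
    simp [tr_op, sigma_apply, this]
  cop := by
    rw [tr_permGroup]
    rw [← Nat.card_congr (Subgroup.equivMapOfInjective E.permGroup e.permCongrHom.toMonoidHom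
      (e.permCongrHom.injective)).toEquiv]
    exact h.cop
  pgr := tr_pgr _ _ h.pgr
  trans := tr_ind _ _ h.trans
  pres f hf v w := by
    have := h.pres (f ∘ e) (fun u v => by simpa [tr_op] using hf (e u) (e v)) (e.symm v) (e.symm w)
    simpa [tr_op] using this

end Transport

lemma normalP {p j : ℕ} (hp : p.Prime) {Y : Type*} [Finite Y] (hY : Nat.card Y = p ^ j)
    (H : Subgroup (Perm Y)) (hH : ¬ p ∣ Nat.card H)
    (htr : ∀ x y, ∃ g ∈ Subgroup.normalizer (H : Set (Perm Y)), g x = y) : H = ⊥ := by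
  let M : Subgroup (Perm Y) := Subgroup.normalizer (H : Set (Perm Y))
  have : MulAction.IsPretransitive M Y := ⟨fun x y => by
    obtain ⟨g, hg, h⟩ := htr x y
    exact ⟨⟨g, hg⟩, h⟩⟩
  have hn : (H.subgroupOf M).Normal := Subgroup.normal_in_normalizer
  have hfix : ∀ y : Y, ∀ h ∈ H, h y = y := by
    intro y h hh
    have hb := MulAction.IsBlock.orbit_of_normal (G := M) (N := H.subgroupOf M) y
    have hd := hb.ncard_dvd_card (MulAction.nonempty_orbit y)
    rw [hY] at hd
    have hd2 : (MulAction.orbit (H.subgroupOf M) y).ncard ∣ Nat.card H := by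
      have := card_eq_orbit H y
      have ho : MulAction.orbit (H.subgroupOf M) y = MulAction.orbit H y := by
        ext x
        constructor
        · rintro ⟨g, rfl⟩; exact ⟨⟨g.1.1, g.2⟩, rfl⟩
        · rintro ⟨g, rfl⟩; exact ⟨⟨⟨g.1, Subgroup.le_normalizer g.2⟩, g.2⟩, rfl⟩
      rw [ho]; exact ⟨_, this⟩
    obtain ⟨i, -, hi⟩ := (Nat.dvd_prime_pow hp).mp hd
    rcases i with _ | i
    · rw [pow_zero, Set.ncard_eq_one] at hi
      obtain ⟨a, ha⟩ := hi
      have h1 : y ∈ ({a} : Set Y) := ha ▸ MulAction.mem_orbit_self y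
      have h2 : h y ∈ ({a} : Set Y) := by
        rw [← ha]
        exact ⟨⟨⟨h, Subgroup.le_normalizer hh⟩, hh⟩, rfl⟩
      rw [Set.mem_singleton_iff] at h1 h2
      rw [h2, h1]
    · exfalso
      rw [hi] at hd2
      exact hH (dvd_trans (dvd_pow_self p (by simp)) hd2)
  rw [eq_bot_iff]
  intro h hh
  rw [Subgroup.mem_bot]
  ext y
  exact hfix y h hh

/-- finite normalizer criterion for closures -/
lemma mem_normalizer_closure {Y I : Type*} [Finite Y] (h : I → Perm Y) (g : Perm Y)
    (hg : ∀ i, g * h i * g⁻¹ ∈ Subgroup.closure (Set.range h)) :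
    g ∈ Subgroup.normalizer (Subgroup.closure (Set.range h) : Set (Perm Y)) := by
  rw [Subgroup.mem_normalizer_iff_map_conj_eq]
  apply Subgroup.eq_of_le_of_card_ge
  · rw [MonoidHom.map_closure, Subgroup.closure_le]
    rintro _ ⟨_, ⟨i, rfl⟩, rfl⟩
    exact hg i
  · rw [← Nat.card_congr (Subgroup.equivMapOfInjective (Subgroup.closure (Set.range h)) _
      (MulAut.conj g).injective).toEquiv]

section Coord
variable {p : ℕ} [hpF : Fact p.Prime] {X : Type*} [Finite X]

lemma exists_central (G K : Subgroup (Perm X)) (hG : IsPGroup p G) (hKG : K ≤ G) (hK : K ≠ ⊥)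
    (hn : ∀ g ∈ G, ∀ k ∈ K, g * k * g⁻¹ ∈ K) :
    ∃ z ∈ K, z ≠ 1 ∧ z ^ p = 1 ∧ ∀ g ∈ G, g * z = z * g := by
  let _ : MulAction G K :=
    { smul := fun g q => ⟨g.1 * q.1 * g.1⁻¹, hn g.1 g.2 q.1 q.2⟩
      one_smul := fun q => Subtype.ext (by change 1 * q.1 * 1⁻¹ = q.1; simp)
      mul_smul := fun g h q => Subtype.ext (by
        change (g.1 * h.1) * q.1 * (g.1 * h.1)⁻¹ = g.1 * (h.1 * q.1 * h.1⁻¹) * g.1⁻¹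
        group) }
  obtain ⟨k, hk⟩ := IsPGroup.iff_card.mp (hG.to_le hKG)
  have hp : p ∣ Nat.card K := by
    rcases k with _ | j
    · exfalso; apply hK
      rw [pow_zero] at hk
      exact Subgroup.card_eq_one.mp hk
    · rw [hk]; exact dvd_pow_self _ (by simp)
  have h0 : (1 : K) ∈ MulAction.fixedPoints G K := by
    intro g; apply Subtype.ext; change g.1 * 1 * g.1⁻¹ = 1; simp
  obtain ⟨q, hq, hne⟩ := hG.exists_fixed_point_of_prime_dvd_card_of_fixed_point K hp h0
  have hc : ∀ g ∈ G, g * q.1 = q.1 * g := by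
    intro g hg
    have : g * q.1 * g⁻¹ = q.1 := congrArg Subtype.val (hq ⟨g, hg⟩)
    exact mul_inv_eq_iff_eq_mul.mp this
  have hq1 : q.1 ≠ 1 := fun h => hne (Subtype.ext h.symm)
  obtain ⟨j, hj⟩ := (hG.to_le hKG) q
  have hj' : q.1 ^ p ^ j = 1 := by
    have := congrArg Subtype.val hj
    simpa using this
  have hex : ∃ j, q.1 ^ p ^ j = 1 := ⟨j, hj'⟩
  classical
  have hf := Nat.find_spec hex
  have hm := fun i => Nat.find_min hex (m := i)
  rcases hi : Nat.find hex with _ | i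
  · rw [hi] at hf; rw [pow_zero, pow_one] at hf; exact absurd hf hq1
  · refine ⟨q.1 ^ p ^ i, K.pow_mem q.2 _, hm i (by omega), ?_, ?_⟩
    · rw [← pow_mul, ← pow_succ, ← hi]; exact hf
    · intro g hg
      exact (Commute.pow_right (hc g hg) _)

lemma coord_f (G : Subgroup (Perm X)) (hG : IsPGroup p G) (hcard : Nat.card X = p ^ 2)
    (htr : ∀ x y, ∃ g ∈ G, g x = y) (z : Perm X) (hz : z ∈ G) (hz1 : z ≠ 1) (hzp : z ^ p = 1)
    (hc : ∀ g ∈ G, g * z = z * g) :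
    ∃ f : X → ZMod p, Function.Surjective f ∧ (∀ g ∈ G, ∃ s, ∀ x, f (g x) = f x + s) ∧
      (∀ x, f (z x) = f x) := by
  have hp : p.Prime := hpF.out
  have hX : Nonempty X := by
    have : 0 < Nat.card X := by rw [hcard]; exact pow_pos hp.pos _
    exact (Nat.card_pos_iff.mp this).1
  obtain ⟨x0⟩ := hX
  let N : Subgroup (Perm X) :=
    { carrier := {g | g ∈ G ∧ ∃ i : ℤ, g x0 = (z ^ i) x0}
      one_mem' := ⟨one_mem _, 0, rfl⟩
      mul_mem' := by
        rintro g h ⟨hg, i, hi⟩ ⟨hh, j, hj⟩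
        refine ⟨mul_mem hg hh, i + j, ?_⟩
        have : g * z ^ j = z ^ j * g := (Commute.zpow_right (hc g hg) j)
        rw [Perm.mul_apply, hj, ← Perm.mul_apply, this, Perm.mul_apply, hi, ← Perm.mul_apply,
          ← zpow_add, add_comm]
      inv_mem' := by
        rintro g ⟨hg, i, hi⟩
        refine ⟨inv_mem hg, -i, ?_⟩
        have : g * z ^ (-i) = z ^ (-i) * g := (Commute.zpow_right (hc g hg) _)
        rw [Perm.inv_eq_iff_eq, ← Perm.mul_apply, this, Perm.mul_apply, hi, ← Perm.mul_apply,
          ← zpow_add]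
        simp }
  have hNG : N ≤ G := fun g hg => hg.1
  have hfree : z x0 ≠ x0 := by
    intro h
    apply hz1
    ext y
    obtain ⟨g, hg, rfl⟩ := htr x0 y
    rw [← Perm.mul_apply, ← hc g hg, Perm.mul_apply, h, Perm.one_apply]
  have ho : (MulAction.orbit N x0).ncard = p := by
    have h1 : MulAction.orbit N x0 = MulAction.orbit (Subgroup.zpowers z) x0 := by
      ext y
      constructor
      · rintro ⟨⟨g, hg, i, hi⟩, rfl⟩
        exact ⟨⟨z ^ i, i, rfl⟩, hi.symm⟩
      · rintro ⟨⟨_, i, rfl⟩, rfl⟩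
        exact ⟨⟨z ^ i, G.zpow_mem hz i, i, rfl⟩, rfl⟩
    rw [h1]
    have h2 := card_eq_orbit (Subgroup.zpowers z) x0
    rw [Nat.card_zpowers, orderOf_eq_prime hzp hz1] at h2
    rcases (Nat.dvd_prime hp).mp ⟨_, h2⟩ with h | h
    · exfalso
      obtain ⟨a, ha⟩ := Set.ncard_eq_one.mp h
      have h3 : x0 ∈ ({a} : Set X) := ha ▸ MulAction.mem_orbit_self x0
      have h4 : z x0 ∈ ({a} : Set X) := by
        rw [← ha]; exact ⟨⟨z, 1, by simp⟩, rfl⟩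
      rw [Set.mem_singleton_iff] at h3 h4
      exact hfree (h4.trans h3.symm)
    · exact h
  have hoG : (MulAction.orbit G x0).ncard = p ^ 2 := by
    rw [← hcard, ← Set.ncard_univ]
    congr 1
    ext x
    simp only [Set.mem_univ, iff_true]
    obtain ⟨g, hg, h⟩ := htr x0 x
    exact ⟨⟨g, hg⟩, h⟩
  have hst : (N ⊓ MulAction.stabilizer (Perm X) x0 : Subgroup (Perm X)) =
      G ⊓ MulAction.stabilizer (Perm X) x0 := by
    apply le_antisymm (inf_le_inf_right _ hNG)
    rintro g ⟨hg, hg'⟩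
    exact ⟨⟨hg, 0, hg'⟩, hg'⟩
  have hi : (N.subgroupOf G).index = p := by
    have e1 := card_eq_orbit G x0
    have e2 := card_eq_orbit N x0
    rw [hst, ho] at e2
    rw [hoG] at e1
    have e3 := (N.subgroupOf G).card_mul_index
    rw [Nat.card_congr (Subgroup.subgroupOfEquivOfLe hNG).toEquiv, e2, e1] at e3
    have hpos : 0 < Nat.card (G ⊓ MulAction.stabilizer (Perm X) x0 : Subgroup (Perm X)) := Nat.card_pos
    have : (p * Nat.card (G ⊓ MulAction.stabilizer (Perm X) x0 : Subgroup (Perm X))) * (N.subgroupOf G).index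
      = (p * Nat.card (G ⊓ MulAction.stabilizer (Perm X) x0 : Subgroup (Perm X))) * p := by
      rw [e3]; ring
    exact Nat.eq_of_mul_eq_mul_left (Nat.mul_pos hp.pos hpos) this
  have hmin : (Nat.card G).minFac = p := by
    obtain ⟨k, hk⟩ := IsPGroup.iff_card.mp hG
    have hk0 : k ≠ 0 := by
      rintro rfl
      have := (N.subgroupOf G).index_dvd_card
      rw [hi, hk, pow_zero, Nat.dvd_one] at this
      exact hp.ne_one this
    rw [hk, hp.pow_minFac hk0]
  have hnorm : (N.subgroupOf G).Normal := Subgroup.normal_of_index_eq_minFac_card (hi.trans hmin.symm)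
  have hcq : Nat.card (G ⧸ N.subgroupOf G) = p := hi
  have hcyc : IsCyclic (G ⧸ N.subgroupOf G) := isCyclic_of_prime_card hcq
  obtain ⟨iso⟩ : Nonempty ((G ⧸ N.subgroupOf G) ≃* Multiplicative (ZMod p)) := by
    have := (zmodCyclicMulEquiv hcyc).symm
    rw [hcq] at this
    exact ⟨this⟩
  let χ : G → ZMod p := fun g => Multiplicative.toAdd (iso (QuotientGroup.mk g))
  have hχm : ∀ g h : G, χ (g * h) = χ g + χ h := by
    intro g h
    simp [χ]
  have hχN : ∀ g : G, g.1 ∈ N → χ g = 0 := by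
    intro g hg
    have : (QuotientGroup.mk g : G ⧸ N.subgroupOf G) = 1 :=
      (QuotientGroup.eq_one_iff g).mpr hg
    simp [χ, this]
  have hχs : Function.Surjective χ := by
    intro b
    obtain ⟨g, hg⟩ := QuotientGroup.mk_surjective (iso.symm (Multiplicative.ofAdd b))
    refine ⟨g, ?_⟩
    simp [χ, hg]
  choose γ hγ hγx using fun x => htr x0 x
  have hf : ∀ g : G, χ ⟨γ (g.1 x0), hγ _⟩ = χ g := by
    intro g
    have h1 : χ (g * (g⁻¹ * ⟨γ (g.1 x0), hγ _⟩)) = χ g + χ (g⁻¹ * ⟨γ (g.1 x0), hγ _⟩) := hχm _ _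
    rw [mul_inv_cancel_left] at h1
    rw [h1, hχN (g⁻¹ * ⟨γ (g.1 x0), hγ _⟩), add_zero]
    refine ⟨(g⁻¹ * ⟨γ (g.1 x0), hγ _⟩ : G).2, 0, ?_⟩
    change g.1⁻¹ (γ (g.1 x0) x0) = x0
    rw [hγx]; simp
  have hgen : ∀ (g : G) x, χ ⟨γ (g.1 x), hγ _⟩ = χ ⟨γ x, hγ _⟩ + χ g := by
    intro g x
    have := hf (g * ⟨γ x, hγ x⟩)
    rw [Subgroup.coe_mul, Perm.mul_apply, hγx, hχm, add_comm] at this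
    exact this
  refine ⟨fun x => χ ⟨γ x, hγ x⟩, ?_, ?_, ?_⟩
  · intro b
    obtain ⟨g, rfl⟩ := hχs b
    exact ⟨g.1 x0, hf g⟩
  · intro g hg
    exact ⟨χ ⟨g, hg⟩, fun x => hgen ⟨g, hg⟩ x⟩
  · intro x
    have := hgen ⟨z, hz⟩ x
    rw [hχN ⟨z, hz⟩ ⟨hz, 1, by simp⟩, add_zero] at this
    exact this

lemma coord_e (hcard : Nat.card X = p ^ 2)
    (z : Perm X) (hzp : z ^ p = 1) (hfree : ∀ x, z x ≠ x)
    (f : X → ZMod p) (hfz : ∀ x, f (z x) = f x) (sec : ZMod p → X) (hsec : ∀ b, f (sec b) = b) :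
    ∃ e : X ≃ ZMod p × ZMod p, (∀ x, (e x).1 = f x) ∧ (∀ b, e (sec b) = (b, 0)) ∧
      ∀ x, e (z x) = ((e x).1, (e x).2 + 1) := by
  have hp : p.Prime := hpF.out
  have : NeZero p := ⟨hp.ne_zero⟩
  have hfzn : ∀ (n : ℕ) x, f ((z ^ n) x) = f x := by
    intro n
    induction n with
    | zero => intro x; rfl
    | succ n ih => intro x; rw [pow_succ', Perm.mul_apply, hfz, ih]
  have hzmod : ∀ n : ℕ, z ^ n = z ^ (n % p) := by
    intro n
    conv_lhs => rw [← Nat.div_add_mod n p, pow_add, pow_mul, hzp, one_pow, one_mul]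
  have hfr : ∀ (n : ℕ) x, (z ^ n) x = x → p ∣ n := by
    intro n x hx
    by_contra hnd
    have hcop : Nat.Coprime n p := ((Nat.Prime.coprime_iff_not_dvd hp).mpr hnd).symm
    obtain ⟨m, hm⟩ := Nat.exists_mul_mod_eq_one_of_coprime hcop hp.one_lt
    apply hfree x
    have : z = (z ^ n) ^ m := by
      rw [← pow_mul, hzmod, hm.2, pow_one]
    rw [this]
    exact Perm.pow_apply_eq_self_of_apply_eq_self hx m
  let F : ZMod p × ZMod p → X := fun by' => (z ^ by'.2.val) (sec by'.1)
  have hF1 : ∀ u, f (F u) = u.1 := fun u => by simp only [F]; rw [hfzn, hsec]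
  have hinj : Function.Injective F := by
    have key : ∀ (b y y' : ZMod p), y.val ≤ y'.val → F (b, y) = F (b, y') → y = y' := by
      intro b y y' hle h
      have : (z ^ (y'.val - y.val)) (sec b) = sec b := by
        apply (z ^ y.val).injective
        rw [← Perm.mul_apply, ← pow_add, Nat.add_sub_cancel' hle]
        exact h.symm
      have hd := hfr _ _ this
      have hlt : y'.val - y.val < p := lt_of_le_of_lt (Nat.sub_le _ _) (ZMod.val_lt y')
      have := Nat.eq_zero_of_dvd_of_lt hd hlt
      apply ZMod.val_injective p
      omega
    rintro ⟨b, y⟩ ⟨b', y'⟩ h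
    have hb : b = b' := by
      have := congrArg f h
      rwa [hF1, hF1] at this
    subst hb
    rcases le_total y.val y'.val with hle | hle
    · rw [key b y y' hle h]
    · rw [key b y' y hle h.symm]
  have hbij : Function.Bijective F := by
    rw [Nat.bijective_iff_injective_and_card]
    refine ⟨hinj, ?_⟩
    rw [Nat.card_prod, Nat.card_zmod, hcard, sq]
  let e0 := Equiv.ofBijective F hbij
  have he0 : ∀ x, F (e0.symm x) = x := fun x => e0.apply_symm_apply x
  have he0' : ∀ u, e0.symm (F u) = u := fun x => e0.symm_apply_apply x
  have h1 : ∀ x, (e0.symm x).1 = f x := by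
    intro x
    rw [← hF1, he0]
  refine ⟨e0.symm, h1, ?_, ?_⟩
  · intro b
    have : sec b = F (b, 0) := by simp [F]
    rw [this, he0']
  · intro x
    have : z x = F ((e0.symm x).1, (e0.symm x).2 + 1) := by
      conv_lhs => rw [← he0 x]
      simp only [F]
      rw [ZMod.val_add, ← hzmod, ← Perm.mul_apply, ← pow_succ', hzmod, hzmod (_ + _)]
      congr 2
      rw [ZMod.val_one_eq_one_mod]
      simp
    rw [this, he0']

lemma coord_g (e : X ≃ ZMod p × ZMod p) (z : Perm X)
    (hz : ∀ x, e (z x) = ((e x).1, (e x).2 + 1)) (g : Perm X) (hgz : g * z = z * g) (s : ZMod p)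
    (hs : ∀ x, (e (g x)).1 = (e x).1 + s) :
    ∃ φ : ZMod p → ZMod p, ∀ x, e (g x) = ((e x).1 + s, (e x).2 + φ (e x).1) := by
  have hp : p.Prime := hpF.out
  have : NeZero p := ⟨hp.ne_zero⟩
  refine ⟨fun b => (e (g (e.symm (b, 0)))).2, ?_⟩
  have key : ∀ (n : ℕ) b, e (g (e.symm (b, (n : ZMod p)))) =
      (b + s, n + (e (g (e.symm (b, 0)))).2) := by
    intro n b
    induction n with
    | zero =>
      apply Prod.ext
      · rw [hs]; simp
      · simp
    | succ n ih =>
      have h1 : e.symm (b, ((n + 1 : ℕ) : ZMod p)) = z (e.symm (b, (n : ZMod p))) := by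
        rw [Equiv.symm_apply_eq, hz]; simp
      rw [h1, ← Perm.mul_apply, hgz, Perm.mul_apply, hz, ih]
      apply Prod.ext
      · rfl
      · push_cast; ring
  intro x
  have := key (e x).2.val (e x).1
  rw [ZMod.natCast_zmod_val] at this
  simp only [Prod.mk.eta, Equiv.symm_apply_apply] at this
  rw [this, add_comm (e x).2]

end Coord
end CycleSet


namespace CycleSet

section Periods
variable {p : ℕ} [hpF : Fact p.Prime]

lemma ratio_iter {k : ZMod p → ZMod p} {s r : ZMod p} (h : ∀ a, k (a + s) = r * k a) (n : ℕ) (a : ZMod p) :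
    k (a + n * s) = r ^ n * k a := by
  induction n with
  | zero => simp
  | succ n ih =>
    have : a + ((n + 1 : ℕ) : ZMod p) * s = (a + n * s) + s := by push_cast; ring
    rw [this, h, ih]; ring

lemma const_of_period {α : Type*} {k : ZMod p → α} {s : ZMod p} (hs : s ≠ 0)
    (h : ∀ a, k (a + s) = k a) (a b : ZMod p) : k a = k b := by
  have hn : ∀ (n : ℕ) a, k (a + n * s) = k a := by
    intro n a
    induction n with
    | zero => simp
    | succ n ih =>
      have : a + ((n + 1 : ℕ) : ZMod p) * s = (a + n * s) + s := by push_cast; ring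
      rw [this, h, ih]
  have := hn ((b - a) / s).val a
  rw [ZMod.natCast_zmod_val, div_mul_cancel₀ _ hs] at this
  rw [← this]; congr 1; ring

lemma ratio_const {k : ZMod p → ZMod p} {s r : ZMod p} (hs : s ≠ 0)
    (h : ∀ a, k (a + s) = r * k a) (a b : ZMod p) : k a = k b := by
  apply const_of_period hs
  intro a
  have := ratio_iter h p a
  rw [ZMod.pow_card] at this
  rw [h, ← this]; simp

lemma affine_of_period {c : ZMod p → ZMod p} {s δ : ZMod p} (hs : s ≠ 0)
    (h : ∀ a, c (a + s) = c a + δ) (x : ZMod p) : c x = c 0 + δ / s * x := by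
  have := const_of_period (k := fun x => c x - δ / s * x) hs (by
    intro a
    simp only [h]
    field_simp
    ring) x 0
  linear_combination this

lemma lemmaP (k : ZMod p → ZMod p) (hk : ∀ a b, k a + k (b + k a) = k b + k (a + k b))
    (hb : Function.Bijective (fun a => a + k a)) (a b : ZMod p) : k a = k b := by
  have : NeZero p := ⟨hpF.out.ne_zero⟩
  let C : CycleSet (ZMod p) :=
    { op := fun a b => b + k a
      c1 := by intro x y z; linear_combination hk x y
      c2 := fun x => (Equiv.addRight (k x)).bijective
      c3 := hb }
  have hC : ∀ u v, C.sigma u v = v + k u := fun u v => rfl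
  have htr : ∀ g ∈ C.permGroup, ∃ s, ∀ x, g x = x + s := by
    intro g hg
    induction hg using Subgroup.closure_induction with
    | mem g hg => obtain ⟨u, rfl⟩ := hg; exact ⟨k u, fun x => hC u x⟩
    | one => exact ⟨0, by simp⟩
    | mul g h _ _ hg hh =>
      obtain ⟨s, hs⟩ := hg
      obtain ⟨s', hs'⟩ := hh
      exact ⟨s' + s, fun x => by rw [Perm.mul_apply, hs', hs, add_assoc]⟩
    | inv g _ hg =>
      obtain ⟨s, hs⟩ := hg
      exact ⟨-s, fun x => by rw [Perm.inv_eq_iff_eq, hs]; ring⟩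
  have hpg : IsPGroup p C.permGroup := by
    intro g
    refine ⟨1, ?_⟩
    obtain ⟨s, hs⟩ := htr g.1 g.2
    have hn : ∀ (n : ℕ) x, (g.1 ^ n) x = x + n * s := by
      intro n
      induction n with
      | zero => intro x; simp
      | succ n ih => intro x; rw [pow_succ', Perm.mul_apply, ih, hs]; push_cast; ring
    apply Subtype.ext
    ext x
    rw [pow_one, Subgroup.coe_pow, hn]; simp
  by_cases h0 : ∀ a, k a = 0
  · rw [h0, h0]
  push Not at h0
  obtain ⟨a0, ha0⟩ := h0
  obtain ⟨q, -, hq1, hq⟩ := C.exists_fix hpg ⊤ (by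
    intro h
    have : C.iota a0 ∈ (⊥ : AddSubgroup C.Q) := h ▸ AddSubgroup.mem_top _
    rw [AddSubgroup.mem_bot] at this
    have h1 := C.psi_iota a0
    rw [this, psi_zero] at h1
    have h2 := hC a0 0
    rw [← h1] at h2
    apply ha0
    simpa using h2.symm) (fun _ _ _ => AddSubgroup.mem_top _)
  obtain ⟨s, hs⟩ := htr (C.psi q).1 (C.psi q).2
  have hs0 : s ≠ 0 := by
    rintro rfl
    apply hq1
    apply Subtype.ext
    ext x
    rw [hs]; simp
  apply const_of_period hs0
  intro u
  have := congrArg (fun g : Perm (ZMod p) => g 0) (hq u)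
  simp only [Perm.mul_apply, hs, hC] at this
  linear_combination this

end Periods

section PG
variable {p : ℕ} [hpF : Fact p.Prime]

def Tri (g : Perm (ZMod p × ZMod p)) (s : ZMod p) (φ : ZMod p → ZMod p) : Prop :=
  ∀ b y, g (b, y) = (b + s, y + φ b)

lemma inv_const {X α : Type*} (C : CycleSet X) (h : C.Indecomposable) (f : X → α)
    (hf : ∀ u v, f (C.op u v) = f v) (x y : X) : f x = f y := by
  have : ∀ g ∈ C.permGroup, ∀ x, f (g x) = f x := by
    intro g hg
    induction hg using Subgroup.closure_induction with
    | mem g hg => obtain ⟨u, rfl⟩ := hg; exact fun x => hf u x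
    | one => intro x; rfl
    | mul g h _ _ hg hh => intro x; rw [Perm.mul_apply, hg, hh]
    | inv g _ hg =>
      intro x
      have := hg (g⁻¹ x)
      rw [← Perm.mul_apply, mul_inv_cancel] at this
      exact this.symm
  obtain ⟨g, hg, rfl⟩ := h x y
  exact (this g hg x).symm

lemma free_of_central {X : Type*} (C : CycleSet X) (h : C.Indecomposable) (z : Perm X) (hz1 : z ≠ 1)
    (hc : ∀ g ∈ C.permGroup, g * z = z * g) (x : X) : z x ≠ x := by
  intro hx
  apply hz1
  ext y
  obtain ⟨g, hg, rfl⟩ := h x y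
  rw [← Perm.mul_apply, ← hc g hg, Perm.mul_apply, hx, Perm.one_apply]

lemma permGroup_ne_bot {X : Type*} [Finite X] (C : CycleSet X) (hcard : Nat.card X = p ^ 2)
    (h : C.Indecomposable) : C.permGroup ≠ ⊥ := by
  intro hb
  have hs : Subsingleton X := ⟨fun x y => by
    obtain ⟨g, hg, hxy⟩ := h x y
    rw [hb, Subgroup.mem_bot] at hg
    rw [← hxy, hg]; rfl⟩
  have h1 : Nat.card X ≤ 1 := Finite.card_le_one_iff_subsingleton.mpr hs
  rw [hcard] at h1
  have := hpF.out.two_le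
  nlinarith

/-- coordinates -/
lemma exists_coord {X : Type*} [Finite X] (C : CycleSet X) (hcard : Nat.card X = p ^ 2)
    (hpg : IsPGroup p C.permGroup) (h : C.Indecomposable) :
    ∃ e : X ≃ ZMod p × ZMod p, ∀ g ∈ (C.tr e).permGroup, ∃ s φ, Tri g s φ := by
  obtain ⟨z, hz, hz1, hzp, hzc⟩ := exists_central C.permGroup C.permGroup hpg le_rfl
    (permGroup_ne_bot C hcard h) (fun g hg k hk => mul_mem (mul_mem hg hk) (inv_mem hg))
  obtain ⟨f, hfs, hfg, hfz⟩ := coord_f C.permGroup hpg hcard h z hz hz1 hzp hzc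
  choose sec hsec using hfs
  obtain ⟨e, he1, -, hez⟩ := coord_e hcard z hzp (free_of_central C h z hz1 hzc) f hfz sec hsec
  refine ⟨e, fun g hg => ?_⟩
  rw [tr_permGroup] at hg
  obtain ⟨g, hg, rfl⟩ := hg
  obtain ⟨s, hs⟩ := hfg g hg
  obtain ⟨φ, hφ⟩ := coord_g e z hez g (hzc g hg) s (fun x => by rw [he1, he1, hs])
  refine ⟨s, φ, fun b y => ?_⟩
  have := hφ (e.symm (b, y))
  simpa using this

lemma op_of_tri (D : CycleSet (ZMod p × ZMod p)) (hD : ∀ g ∈ D.permGroup, ∃ s φ, Tri g s φ) :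
    ∃ (c : ZMod p × ZMod p → ZMod p) (F : ZMod p × ZMod p → ZMod p → ZMod p),
      ∀ u b y, D.op u (b, y) = (b + c u, y + F u b) := by
  choose c F h using fun u => hD (D.sigma u) (D.sigma_mem u)
  exact ⟨c, F, fun u b y => h u b y⟩

lemma fiber_ne (D : CycleSet (ZMod p × ZMod p)) (h : D.Indecomposable) (c : ZMod p)
    (hc : ∀ u v, (D.op u v).1 = v.1 + c) : c ≠ 0 := by
  rintro rfl
  have := inv_const D h (fun v => v.1) (fun u v => by rw [hc, add_zero]) (0, 0) (1, 0)
  exact zero_ne_one this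

lemma caseI_of_const (D : CycleSet (ZMod p × ZMod p)) (h : D.Indecomposable) (c : ZMod p)
    (hc : ∀ u v, (D.op u v).1 = v.1 + c) : ∃ f : ZMod p × ZMod p → ZMod p, ∀ u v, f (D.op u v) = f v + 1 := by
  have h0 := fiber_ne D h c hc
  refine ⟨fun v => v.1 / c, fun u v => ?_⟩
  simp only [hc]; field_simp

/-- automorphism preserving columns -/
lemma lemA (D : CycleSet (ZMod p × ZMod p)) (h : D.Indecomposable)
    (hD : ∀ g ∈ D.permGroup, ∃ s φ, Tri g s φ) (t : Perm (ZMod p × ZMod p)) (ht1 : t ≠ 1)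
    (φ : ZMod p → ZMod p) (ht : Tri t 0 φ) (haut : ∀ u v, D.op (t u) (t v) = t (D.op u v)) :
    ∃ f : ZMod p × ZMod p → ZMod p, ∀ u v, f (D.op u v) = f v + 1 := by
  obtain ⟨c, F, hop⟩ := op_of_tri D hD
  have ht' : ∀ b y, t (b, y) = (b, y + φ b) := fun b y => by rw [ht b y, add_zero]
  have hφ0 : ¬ ∀ a, φ a = 0 := by
    intro h0
    apply ht1
    ext1 ⟨b, y⟩
    rw [ht', h0, add_zero]; rfl
  have e1 : ∀ a x, c (a, x + φ a) = c (a, x) := by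
    intro a x
    have := haut (a, x) (0, 0)
    rw [ht', ht', hop, hop, ht'] at this
    have := (Prod.mk.inj this).1
    simpa using this
  have e2 : ∀ a x b, F (a, x + φ a) b + φ b = F (a, x) b + φ (b + c (a, x)) := by
    intro a x b
    have := haut (a, x) (b, 0)
    rw [ht', ht', hop, hop, ht'] at this
    have := (Prod.mk.inj this).2
    linear_combination this
  have e3 : ∀ a x, c (a, x) = c (a, 0) := by
    intro a x
    by_cases ha : φ a = 0
    · have key : ∀ x, c (a, x) = 0 := by
        intro x
        by_contra hne
        apply hφ0
        intro b
        rw [← ha]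
        apply const_of_period hne
        intro b
        have := e2 a x b
        rw [ha, add_zero] at this
        linear_combination -this
      rw [key, key]
    · exact const_of_period (k := fun x => c (a, x)) ha (fun x => e1 a x) x 0
  have hop' : ∀ a x v, (D.op (a, x) v).1 = v.1 + c (a, 0) := by
    rintro a x ⟨b, y⟩
    rw [hop, e3]
  have hconst := lemmaP (fun a => c (a, 0)) (by
    intro a b
    have := congrArg Prod.fst (D.c1 (a, 0) (b, 0) (0, 0))
    rw [hop, hop, hop, hop] at this
    simp only [hop', e3 (b + _), e3 (a + _)] at this
    linear_combination this) (by
    apply Finite.injective_iff_bijective.mp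
    apply Finite.injective_iff_surjective.mpr
    intro b
    obtain ⟨⟨a, x⟩, hu⟩ := D.c3.2 (b, 0)
    refine ⟨a, ?_⟩
    have := congrArg Prod.fst hu
    simp only [hop'] at this
    exact this)
  apply caseI_of_const D h (c (0, 0))
  rintro ⟨a, x⟩ v
  rw [hop', hconst a 0]

lemma tri_pow (t : Perm (ZMod p × ZMod p)) (s : ZMod p) (φ : ZMod p → ZMod p) (ht : Tri t s φ) (n : ℕ) :
    ∃ φ', Tri (t ^ n) (n * s) φ' := by
  induction n with
  | zero => exact ⟨fun _ => 0, fun b y => by simp⟩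
  | succ n ih =>
    obtain ⟨φ', h⟩ := ih
    refine ⟨fun b => φ' b + φ (b + n * s), fun b y => ?_⟩
    rw [pow_succ', Perm.mul_apply, h, ht]
    push_cast
    apply Prod.ext <;> simp only <;> ring

lemma aut_pow {X : Type*} (D : CycleSet X) (t : Perm X) (h : ∀ u v, D.op (t u) (t v) = t (D.op u v))
    (n : ℕ) : ∀ u v, D.op ((t ^ n) u) ((t ^ n) v) = (t ^ n) (D.op u v) := by
  induction n with
  | zero => intro u v; rfl
  | succ n ih => intro u v; rw [pow_succ', Perm.mul_apply, Perm.mul_apply, h, ih]; rfl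

/-- the vertical shift -/
def vshift : Perm (ZMod p × ZMod p) where
  toFun v := (v.1, v.2 + 1)
  invFun v := (v.1, v.2 - 1)
  left_inv v := by simp
  right_inv v := by simp

lemma vshift_apply (v : ZMod p × ZMod p) : (vshift : Perm (ZMod p × ZMod p)) v = (v.1, v.2 + 1) := rfl

lemma tri_comm {g : Perm (ZMod p × ZMod p)} {s : ZMod p} {φ : ZMod p → ZMod p} (h : Tri g s φ) :
    g * vshift = vshift * g := by
  ext1 ⟨b, y⟩
  rw [Perm.mul_apply, Perm.mul_apply, vshift_apply, h, h, vshift_apply]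
  apply Prod.ext <;> simp only <;> ring

lemma vshift_pow (n : ℕ) (v : ZMod p × ZMod p) :
    ((vshift : Perm (ZMod p × ZMod p)) ^ n) v = (v.1, v.2 + n) := by
  induction n with
  | zero => simp
  | succ n ih =>
    rw [pow_succ', Perm.mul_apply, ih, vshift_apply]; push_cast
    apply Prod.ext <;> simp only ; ring

/-- automorphism moving columns: recoordinatize so that it is the shift. -/
lemma lemB (D : CycleSet (ZMod p × ZMod p)) 
    (hD : ∀ g ∈ D.permGroup, ∃ s φ, Tri g s φ) (t : Perm (ZMod p × ZMod p)) (htp : t ^ p = 1)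
    (s : ZMod p) (hs : s ≠ 0)
    (φ : ZMod p → ZMod p) (ht : Tri t s φ) (haut : ∀ u v, D.op (t u) (t v) = t (D.op u v)) :
    ∃ e : ZMod p × ZMod p ≃ ZMod p × ZMod p, ∃ (c : ZMod p → ZMod p) (Φ : ZMod p → ZMod p → ZMod p),
      ∀ a x b y, (D.tr e).op (a, x) (b, y) = (b + c x, y + Φ x (b - a)) := by
  have hp : p.Prime := hpF.out
  have : NeZero p := ⟨hp.ne_zero⟩
  have hpow : ∀ (n : ℕ) x, ((t ^ n) x).1 = x.1 + n * s := by
    rintro n ⟨b, y⟩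
    obtain ⟨φ', h⟩ := tri_pow t s φ ht n
    rw [h]
  have hmod : ∀ n : ℕ, t ^ n = t ^ (n % p) := by
    intro n
    conv_lhs => rw [← Nat.div_add_mod n p, pow_add, pow_mul, htp, one_pow, one_mul]
  obtain ⟨e, he1, hesec, hez⟩ := coord_e (p := p) (X := ZMod p × ZMod p)
    (by rw [Nat.card_prod, Nat.card_zmod, sq]) vshift
    (by ext1 v; rw [vshift_pow]; simp)
    (fun x hx => by
      have := congrArg Prod.snd hx
      rw [vshift_apply] at this
      simp at this)
    (fun v => v.1 / s) (fun v => rfl) (fun b => (t ^ b.val) (0, 0))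
    (fun b => by simp only [hpow]; simp [hs])
  have hg : ∀ (g : Perm (ZMod p × ZMod p)) s' φ, Tri g s' φ → ∃ φ' : ZMod p → ZMod p, ∀ x, e (g x) =
      ((e x).1 + s' / s, (e x).2 + φ' (e x).1) := by
    intro g s' φ hg
    apply coord_g e vshift hez g (tri_comm hg)
    rintro ⟨b, y⟩
    rw [he1, he1, hg]; simp only; field_simp
  have het : ∀ x, e (t x) = ((e x).1 + 1, (e x).2) := by
    obtain ⟨φ', h⟩ := hg t s φ ht
    have h0 : ∀ b, φ' b = 0 := by
      intro b
      have h1 := h ((t ^ b.val) (0, 0))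
      rw [hesec, ← Perm.mul_apply t, ← pow_succ', hmod] at h1
      have h2 := hesec (b + 1)
      rw [ZMod.val_add, ZMod.val_one_eq_one_mod] at h2
      simp only [Nat.add_mod_mod] at h2
      rw [h2] at h1
      have := congrArg Prod.snd h1
      simpa using this.symm
    intro x
    rw [h, h0, add_zero, div_self hs]
  have hop : ∀ u, ∃ (c : ZMod p) (F : ZMod p → ZMod p), ∀ b y, (D.tr e).op u (b, y) = (b + c, y + F b) := by
    intro u
    obtain ⟨s', φ', h⟩ := hD (D.sigma (e.symm u)) (D.sigma_mem _)
    obtain ⟨φ'', h'⟩ := hg _ _ _ h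
    refine ⟨s' / s, φ'', fun b y => ?_⟩
    have := h' (e.symm (b, y))
    rw [Equiv.apply_symm_apply] at this
    exact this
  choose c F hcF using hop
  have haut2 : ∀ a x b y, (D.tr e).op (a + 1, x) (b + 1, y) =
      (((D.tr e).op (a, x) (b, y)).1 + 1, ((D.tr e).op (a, x) (b, y)).2) := by
    intro a x b y
    have h1 : ∀ a x, e.symm (a + 1, x) = t (e.symm (a, x)) := by
      intro a x
      rw [Equiv.symm_apply_eq, het]; simp
    rw [tr_op, tr_op, h1, h1, haut, het]
  have hshift : ∀ (n : ℕ) a x b y, (D.tr e).op (a + n, x) (b + n, y) =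
      (((D.tr e).op (a, x) (b, y)).1 + n, ((D.tr e).op (a, x) (b, y)).2) := by
    intro n
    induction n with
    | zero => intro a x b y; simp
    | succ n ih =>
      intro a x b y
      push_cast
      rw [← add_assoc, ← add_assoc, haut2, ih]
      simp [add_assoc]
  refine ⟨e, fun x => c (0, x), fun x d => F (0, x) d, fun a x b y => ?_⟩
  have := hshift a.val 0 x (b - a) y
  rw [ZMod.natCast_zmod_val, zero_add, sub_add_cancel, hcF (0, x)] at this
  rw [this]
  apply Prod.ext <;> simp only ; ring

end PG
end CycleSet


namespace CycleSet
section PG2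
variable {p : ℕ} [hpF : Fact p.Prime]

lemma lemC (D : CycleSet (ZMod p × ZMod p)) (h : D.Indecomposable) (c : ZMod p → ZMod p)
    (Φ : ZMod p → ZMod p → ZMod p)
    (hop : ∀ a x b y, D.op (a, x) (b, y) = (b + c x, y + Φ x (b - a))) :
    (∃ f : ZMod p × ZMod p → ZMod p, ∀ u v, f (D.op u v) = f v + 1) ∨
    ∃ (e : ZMod p × ZMod p ≃ ZMod p × ZMod p) (Ψ : ZMod p → ZMod p), (∃ i j, Ψ i ≠ Ψ j) ∧
      (∀ A, Ψ (-A) = Ψ A) ∧ ∀ a x b y, (D.tr e).op (a, x) (b, y) = (b + x, y + Ψ (b - a)) := by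
  by_cases hcc : ∀ x, c x = c 0
  · left
    apply caseI_of_const D h (c 0)
    rintro ⟨a, x⟩ ⟨b, y⟩
    rw [hop, hcc]
  have hnc : ∀ s ≠ 0, ¬ ∀ x, c (x + s) = c x := by
    intro s hs hper
    exact hcc (fun x => const_of_period hs hper x 0)
  have c1 : ∀ x y f, c x + c (y + Φ x f) = c y + c (x + Φ y (-f)) := by
    intro x y f
    have := congrArg Prod.fst (D.c1 (0, x) (f, y) (0, 0))
    simp only [hop] at this
    simp only [sub_zero, zero_sub] at this
    linear_combination this
  have c2 : ∀ x y e f, Φ x e + Φ (y + Φ x f) (e - f) = Φ y (e - f) + Φ (x + Φ y (-f)) e := by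
    intro x y e f
    have := congrArg Prod.snd (D.c1 (0, x) (f, y) (e, 0))
    simp only [hop] at this
    simp only [sub_zero, zero_sub, zero_add, add_sub_add_right_eq_sub, add_sub_cancel_right] at this
    linear_combination this
  have hg : ∀ x, Φ x 0 = Φ 0 0 := by
    intro x
    refine lemmaP (fun x => Φ x 0) ?_ ?_ x 0
    · intro a b
      have := c2 a b 0 0
      simpa using this
    · apply Finite.injective_iff_bijective.mp
      apply Finite.injective_iff_surjective.mpr
      intro b
      obtain ⟨⟨a, x⟩, hu⟩ := D.c3.2 (0, b)
      refine ⟨x, ?_⟩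
      have := congrArg Prod.snd hu
      simp only [hop, sub_self] at this
      exact this
  -- main claim
  have main : ∃ (c1 : ZMod p), c1 ≠ 0 ∧ (∀ x, c x = c 0 + c1 * x) ∧ (∀ x f, Φ x f = Φ 0 f) ∧
      ∀ f, Φ 0 (-f) = Φ 0 f := by
    have fin : ∀ κ, (∀ x, c x = c 0 + κ * x) → κ ≠ 0 ∧ ∀ x y f, Φ x f = Φ y (-f) := by
      intro κ hκ
      have hκ0 : κ ≠ 0 := by
        rintro rfl
        apply hcc
        intro x; rw [hκ]; ring
      refine ⟨hκ0, fun x y f => ?_⟩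
      have := c1 x y f
      rw [hκ x, hκ (y + _), hκ y, hκ (x + _)] at this
      apply mul_left_cancel₀ hκ0
      linear_combination this
    have fin2 : ∀ s δ, s ≠ 0 → (∀ x, c (x + s) = c x + δ) → ∃ (c1 : ZMod p), c1 ≠ 0 ∧
        (∀ x, c x = c 0 + c1 * x) ∧ (∀ x f, Φ x f = Φ 0 f) ∧ ∀ f, Φ 0 (-f) = Φ 0 f := by
      intro s δ hs hper
      have haff := affine_of_period hs hper
      obtain ⟨h1, h2⟩ := fin _ haff
      refine ⟨_, h1, haff, fun x f => ?_, fun f => (h2 0 0 f).symm⟩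
      rw [h2 x 0 f, ← h2 0 0 f]
    by_cases hg0 : Φ 0 0 = 0
    · have hzero : ∀ x, Φ x 0 = 0 := fun x => (hg x).trans hg0
      have hα : ∀ x y f, Φ (x + Φ y (-f)) f = Φ x f := by
        intro x y f
        have := c2 x y f f
        simp only [sub_self, hzero] at this
        linear_combination -this
      have hconst : ∀ x f, Φ x f = Φ 0 f := by
        intro x f
        by_cases hβ : ∃ y, Φ y (-f) ≠ 0
        · obtain ⟨y, hy⟩ := hβ
          exact const_of_period (k := fun x => Φ x f) hy (fun x => hα x y f) x 0
        · push Not at hβ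
          have : ∀ x, Φ x f = 0 := by
            intro x
            by_contra hne
            apply hnc _ hne
            intro y
            have := c1 x y f
            rw [hβ, add_zero] at this
            linear_combination this
          rw [this, this]
      have hex : ∃ f, Φ 0 f ≠ 0 := by
        by_contra hall
        push Not at hall
        have := inv_const D h (fun v => v.2) (by
          rintro ⟨a, x⟩ ⟨b, y⟩
          rw [hop, hconst, hall]; simp) (0, 0) (0, 1)
        exact zero_ne_one this
      obtain ⟨f, hf⟩ := hex
      apply fin2 _ (c (0 + Φ 0 (-f)) - c 0) hf
      intro x
      have := c1 0 x f
      rw [hconst x] at this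
      linear_combination this
    · apply fin2 _ (c (0 + Φ 0 0) - c 0) hg0
      intro x
      have := c1 0 x 0
      rw [neg_zero, hg x] at this
      linear_combination this
  obtain ⟨κ, hκ, hc, hΦ, hev⟩ := main
  by_cases hconst : ∀ i, Φ 0 i = Φ 0 0
  · left
    have h0 : Φ 0 0 ≠ 0 := by
      intro h0
      have := inv_const D h (fun v => v.2) (by
          rintro ⟨a, x⟩ ⟨b, y⟩
          rw [hop, hΦ, hconst, h0]; simp) (0, 0) (0, 1)
      exact zero_ne_one this
    refine ⟨fun v => v.2 / Φ 0 0, ?_⟩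
    rintro ⟨a, x⟩ ⟨b, y⟩
    rw [hop, hΦ x, hconst (b - a)]
    field_simp
  · right
    push Not at hconst
    obtain ⟨i, hi⟩ := hconst
    let e : ZMod p × ZMod p ≃ ZMod p × ZMod p :=
      { toFun := fun v => (v.1, c 0 + κ * v.2)
        invFun := fun v => (v.1, (v.2 - c 0) / κ)
        left_inv := fun v => by apply Prod.ext <;> simp [hκ]
        right_inv := fun v => by apply Prod.ext; · simp
                                 · simp only; field_simp; ring }
    refine ⟨e, fun A => κ * Φ 0 A, ⟨i, 0, ?_⟩, ?_, ?_⟩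
    · intro h; exact hi (mul_left_cancel₀ hκ h)
    · intro A; simp only [hev]
    · intro a x b y
      have he : ∀ b y, e.symm (b, y) = (b, (y - c 0) / κ) := fun b y => rfl
      have he' : ∀ b y, e (b, y) = (b, c 0 + κ * y) := fun b y => rfl
      rw [tr_op, he, he, hop, he', hΦ, hc]
      apply Prod.ext
      · simp only; field_simp; ring
      · simp only; field_simp; ring

theorem thmPG {X : Type*} [Finite X] (C : CycleSet X) (hcard : Nat.card X = p ^ 2)
    (hpg : IsPGroup p C.permGroup) (h : C.Indecomposable) :
    (∃ f : X → ZMod p, ∀ u v, f (C.op u v) = f v + 1) ∨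
    ∃ (e : X ≃ ZMod p × ZMod p) (Ψ : ZMod p → ZMod p), (∃ i j, Ψ i ≠ Ψ j) ∧
      (∀ A, Ψ (-A) = Ψ A) ∧ ∀ a x b y, (C.tr e).op (a, x) (b, y) = (b + x, y + Ψ (b - a)) := by
  have back : ∀ (Y : Type _) [Finite Y] (e : X ≃ Y), (∃ f : Y → ZMod p, ∀ u v, f ((C.tr e).op u v) = f v + 1) →
      ∃ f : X → ZMod p, ∀ u v, f (C.op u v) = f v + 1 := by
    rintro Y _ e ⟨f, hf⟩
    refine ⟨f ∘ e, fun u v => ?_⟩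
    have := hf (e u) (e v)
    simpa [tr_op] using this
  obtain ⟨e, he⟩ := exists_coord C hcard hpg h
  have hD := tr_ind C e h
  have hDp := tr_pgr C e hpg
  obtain ⟨q, -, hq1, hq⟩ := (C.tr e).exists_fix hDp ⊤ (by
    intro hbot
    apply permGroup_ne_bot (p := p) (C.tr e) (by rw [Nat.card_prod, Nat.card_zmod, sq]) hD
    rw [Subgroup.eq_bot_iff_forall]
    intro g hg
    obtain ⟨q, hq⟩ := (C.tr e).psi_surj ⟨g, hg⟩
    have : q ∈ (⊥ : AddSubgroup (C.tr e).Q) := hbot ▸ AddSubgroup.mem_top _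
    rw [AddSubgroup.mem_bot] at this
    rw [this, psi_zero] at hq
    exact (congrArg Subtype.val hq).symm) (fun _ _ _ => AddSubgroup.mem_top _)
  set t := ((C.tr e).psi q).1 with htdef
  have ht1 : t ≠ 1 := fun h => hq1 (Subtype.ext h)
  have htG : t ∈ (C.tr e).permGroup := ((C.tr e).psi q).2
  have haut : ∀ u v, (C.tr e).op (t u) (t v) = t ((C.tr e).op u v) := by
    intro u v
    exact congrArg (fun g : Perm _ => g v) (hq u)
  obtain ⟨s, φ, hs⟩ := he t htG
  by_cases hs0 : s = 0
  · subst hs0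
    left
    exact back _ e (lemA _ hD he t ht1 φ hs haut)
  · by_cases htp : t ^ p = 1
    · obtain ⟨e', c, Φ, hop⟩ := lemB _ he t htp s hs0 φ hs haut
      rcases lemC _ (tr_ind _ e' hD) c Φ hop with hI | ⟨e'', Ψ, h1, h2, h3⟩
      · left
        exact back _ (e.trans e') hI
      · right
        exact ⟨(e.trans e').trans e'', Ψ, h1, h2, h3⟩
    · left
      obtain ⟨φ', hφ'⟩ := tri_pow t s φ hs p
      rw [CharP.cast_eq_zero, zero_mul] at hφ'
      exact back _ e (lemA _ hD he (t ^ p) htp φ' hφ' (aut_pow _ t haut p))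

theorem lemI {X : Type*} [Finite X] (C : CycleSet X) (hcard : Nat.card X = p ^ 2)
    (hpg : IsPGroup p C.permGroup) (h : C.Indecomposable)
    (f : X → ZMod p) (hf : ∀ u v, f (C.op u v) = f v + 1) :
    ∃ (e : X ≃ ZMod p × ZMod p) (F : ZMod p → ZMod p → ZMod p),
      (∀ x, (e x).1 = f x) ∧
      ∀ a x b y, (C.tr e).op (a, x) (b, y) = (b + 1, y + F a b) := by
  have hp : p.Prime := hpF.out
  have : NeZero p := ⟨hp.ne_zero⟩
  have hX : Nonempty X := by
    have : 0 < Nat.card X := by rw [hcard]; exact pow_pos hp.pos _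
    exact (Nat.card_pos_iff.mp this).1
  obtain ⟨x0⟩ := hX
  have hSS : ∀ (a : Multiset X) v, f (C.SS a v) = f v + a.card := by
    intro a
    induction a using Multiset.induction with
    | empty => intro v; simp [SS_zero]
    | cons x a ih =>
      intro v
      rw [SS_cons, Perm.mul_apply, sigma_apply, hf, ih]
      simp [add_assoc]
  obtain ⟨ε, hε⟩ : ∃ ε : C.Q → ZMod p, ∀ a, ε (C.mkQ a) = a.card := by
    refine ⟨fun q => f ((C.psi q : Perm X) x0) - f x0, fun a => ?_⟩
    simp only [psi_mk, hSS]; ring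
  have hfe : ∀ q v, f ((C.psi q : Perm X) v) = f v + ε q := by
    intro q v
    obtain ⟨a, rfl⟩ := C.mkQ_surj q
    rw [psi_mk, hSS, hε]
  have hεadd : ∀ q r, ε (q + r) = ε q + ε r := by
    intro q r
    obtain ⟨a, rfl⟩ := C.mkQ_surj q
    obtain ⟨b, rfl⟩ := C.mkQ_surj r
    rw [← map_add, hε, hε, hε]; simp
  have hεs : ∀ (g : C.permGroup) q, ε (g • q) = ε q := by
    intro g q
    obtain ⟨a, rfl⟩ := C.mkQ_surj q
    rw [smul_mk, hε, hε]; simp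
  let εh : C.Q →+ ZMod p := AddMonoidHom.mk' ε hεadd
  have hfg : ∀ g ∈ C.permGroup, ∃ s, ∀ x, f (g x) = f x + s := by
    intro g hg
    obtain ⟨q, hq⟩ := C.psi_surj ⟨g, hg⟩
    refine ⟨ε q, fun x => ?_⟩
    rw [← hfe, hq]
  -- nontrivial element preserving f
  obtain ⟨x, y, hxy, hfxy⟩ : ∃ x y, x ≠ y ∧ f x = f y := by
    by_contra hcon
    push Not at hcon
    have hinj : Function.Injective f := by
      intro x y hxy
      by_contra hne
      exact hcon x y hne hxy
    have := Nat.card_le_card_of_injective f hinj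
    rw [hcard, Nat.card_zmod] at this
    have := hp.two_le
    nlinarith
  obtain ⟨g, hg, hgx⟩ := h x y
  have hg1 : g ≠ 1 := by
    rintro rfl
    exact hxy hgx
  have hgf : ∀ v, f (g v) = f v := by
    obtain ⟨s, hs⟩ := hfg g hg
    have := hs x
    rw [hgx, hfxy, left_eq_add] at this
    intro v; rw [hs, this, add_zero]
  let K : Subgroup (Perm X) :=
    { carrier := {g | g ∈ C.permGroup ∧ ∀ v, f (g v) = f v}
      one_mem' := ⟨one_mem _, fun v => rfl⟩
      mul_mem' := fun {g h} hg hh => ⟨mul_mem hg.1 hh.1, fun v => by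
        rw [Perm.mul_apply, hg.2, hh.2]⟩
      inv_mem' := fun {g} hg => ⟨inv_mem hg.1, fun v => by
        have := hg.2 (g⁻¹ v)
        rw [← Perm.mul_apply, mul_inv_cancel] at this
        exact this.symm⟩ }
  obtain ⟨z, hzK, hz1, hzp, hzc⟩ := exists_central C.permGroup K hpg (fun g hg => hg.1)
    (fun hb => hg1 (by
      have : g ∈ K := ⟨hg, hgf⟩
      rw [hb] at this
      exact Subgroup.mem_bot.mp this))
    (fun g hg k hk => by
      refine ⟨mul_mem (mul_mem hg hk.1) (inv_mem hg), fun v => ?_⟩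
      obtain ⟨s, hs⟩ := hfg g hg
      have h1 := hs (g⁻¹ v)
      rw [← Perm.mul_apply, mul_inv_cancel] at h1
      rw [Perm.mul_apply, Perm.mul_apply, hs, hk.2, ← h1]; rfl)
  have hfs : Function.Surjective f := by
    intro b
    have : ∀ n : ℕ, ∃ x, f x = f x0 + n := by
      intro n
      induction n with
      | zero => exact ⟨x0, by simp⟩
      | succ n ih =>
        obtain ⟨x, hx⟩ := ih
        exact ⟨C.op x0 x, by rw [hf, hx]; push_cast; ring⟩
    obtain ⟨x, hx⟩ := this (b - f x0).val
    refine ⟨x, ?_⟩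
    rw [hx, ZMod.natCast_zmod_val]; ring
  choose sec hsec using hfs
  obtain ⟨e, he1, -, hez⟩ := coord_e hcard z hzp (free_of_central C h z hz1 hzc) f hzK.2 sec hsec
  obtain ⟨q, hqB, hq1, hq⟩ := C.exists_fix hpg εh.ker (by
    intro hbot
    obtain ⟨q, hq⟩ := C.psi_surj ⟨g, hg⟩
    have hqk : q ∈ εh.ker := by
      rw [AddMonoidHom.mem_ker]
      change ε q = 0
      have := hfe q x
      rw [hq] at this
      simp only [hgf] at this
      rwa [left_eq_add] at this
    rw [hbot, AddSubgroup.mem_bot] at hqk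
    rw [hqk, psi_zero] at hq
    exact hg1 (congrArg Subtype.val hq).symm) (by
    intro g q hq
    rw [AddMonoidHom.mem_ker] at hq ⊢
    exact (hεs g q).trans hq)
  have hεq : ε q = 0 := hqB
  have hco : ∀ g ∈ C.permGroup, ∀ s, (∀ v, f (g v) = f v + s) → ∃ φ : ZMod p → ZMod p,
      ∀ b y, e (g (e.symm (b, y))) = (b + s, y + φ b) := by
    intro g hg s hs
    obtain ⟨φ, hφ⟩ := coord_g e z hez g (hzc g hg) s (fun x => by rw [he1, he1, hs])
    refine ⟨φ, fun b y => ?_⟩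
    have := hφ (e.symm (b, y))
    simpa using this
  obtain ⟨φ, hφ⟩ := hco (C.psi q).1 (C.psi q).2 0 (fun v => by rw [hfe, hεq])
  choose F hF using fun u => hco (C.sigma (e.symm u)) (C.sigma_mem _) 1 (fun v => hf _ v)
  have hop : ∀ a x b y, (C.tr e).op (a, x) (b, y) = (b + 1, y + F (a, x) b) := by
    intro a x b y
    exact hF (a, x) b y
  simp only [add_zero] at hφ
  have hφ' : ∀ b y, (C.psi q : Perm X) (e.symm (b, y)) = e.symm (b, y + φ b) := by
    intro b y
    rw [Equiv.eq_symm_apply, hφ]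
  have hφ0 : ¬ ∀ a, φ a = 0 := by
    intro h0
    apply hq1
    apply Subtype.ext
    ext1 v
    have := hφ' (e v).1 (e v).2
    rw [h0, add_zero] at this
    simpa using this
  have haut : ∀ a x d, F (a, x + φ a) d + φ d = F (a, x) d + φ (d + 1) := by
    intro a x d
    have := congrArg (fun g : Perm X => e (g (e.symm (d, 0)))) (hq (e.symm (a, x)))
    simp only [Perm.mul_apply, hφ', sigma_apply] at this
    have h1 := hop a (x + φ a) d (0 + φ d)
    rw [tr_op] at h1
    rw [h1] at this
    have h2 := hop a x d 0
    rw [tr_op, ← Equiv.eq_symm_apply] at h2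
    rw [h2, hφ'] at this
    have := congrArg Prod.snd this
    simp at this
    linear_combination this
  by_cases hcon : ∀ a, φ a = φ 0
  · have h0 : φ 0 ≠ 0 := fun h0 => hφ0 (fun a => (hcon a).trans h0)
    refine ⟨e, fun a b => F (a, 0) b, he1, fun a x b y => ?_⟩
    rw [hop]
    have : F (a, x) b = F (a, 0) b := by
      refine const_of_period (k := fun x => F (a, x) b) h0 (fun x => ?_) x 0
      have := haut a x b
      rw [hcon a, hcon b, hcon (b + 1)] at this
      exact add_right_cancel this
    rw [this]
  · exfalso
    have hnz : ∀ a, φ a ≠ 0 := by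
      intro a ha
      apply hcon
      intro b
      refine const_of_period one_ne_zero (fun d => ?_) b 0
      have := haut a 0 d
      rw [ha, add_zero] at this
      linear_combination -this
    have hFx : ∀ a x d, F (a, x) d = F (a, 0) d + (φ (d + 1) - φ d) / φ a * x := by
      intro a x d
      exact affine_of_period (c := fun x => F (a, x) d) (hnz a) (fun x => by
        linear_combination haut a x d) x
    have hc : ∀ a x b y d, F (a, x) d + F (b + 1, y + F (a, x) b) (d + 1) =
        F (b, y) d + F (a + 1, x + F (b, y) a) (d + 1) := by
      intro a x b y d
      have := congrArg Prod.snd ((C.tr e).c1 (a, x) (b, y) (d, 0))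
      simp only [hop] at this
      linear_combination this
    have hcoef : ∀ a b d, (φ (d + 1) - φ d) / φ a +
        (φ (b + 1) - φ b) / φ a * ((φ (d + 1 + 1) - φ (d + 1)) / φ (b + 1)) =
        (φ (d + 1 + 1) - φ (d + 1)) / φ (a + 1) := by
      intro a b d
      have h0 := hc a 0 b 0 d
      have h1 := hc a 1 b 0 d
      rw [hFx (b + 1), hFx (a + 1) (0 + _)] at h0
      rw [hFx (b + 1), hFx (a + 1) (1 + _), hFx a 1 d, hFx a 1 b] at h1
      linear_combination h1 - h0
    obtain ⟨d, hd⟩ : ∃ d, φ (d + 1 + 1) - φ (d + 1) ≠ 0 := by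
      by_contra hall
      push Not at hall
      apply hcon
      intro a
      refine const_of_period one_ne_zero (fun d => ?_) a 0
      have := hall (d - 1)
      rw [sub_add_cancel] at this
      linear_combination this
    have hr : ∀ b, φ b = φ 0 / φ (0 + 1) * φ (b + 1) := by
      intro b
      have h1 := hcoef 0 b d
      have h2 := hcoef 0 0 d
      have h3 : (φ (b + 1) - φ b) / φ (b + 1) = (φ (0 + 1) - φ 0) / φ (0 + 1) := by
        apply mul_right_cancel₀ hd
        apply mul_left_cancel₀ (inv_ne_zero (hnz 0))
        rw [div_eq_mul_inv, div_eq_mul_inv]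
        simp only [div_eq_mul_inv] at h1 h2
        linear_combination h1 - h2
      have ha := hnz (b + 1)
      have hb := hnz (0 + 1)
      rw [sub_div, sub_div, div_self ha, div_self hb] at h3
      have h4 : φ b / φ (b + 1) = φ 0 / φ (0 + 1) := by linear_combination -h3
      rw [← h4, div_mul_cancel₀ _ ha]
    apply hcon
    intro a
    refine ratio_const (s := -1) (r := φ 0 / φ (0 + 1)) (by simp) (fun b => ?_) a 0
    have := hr (b + -1)
    rw [this]; congr 2; ring

end PG2
end CycleSet


namespace CycleSet
section PolyZ
open Polynomial
variable {p : ℕ} [hpF : Fact p.Prime]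

def Deg (g : ZMod p → ZMod p) (d : ℕ) : Prop :=
  ∃ G : (ZMod p)[X], G.natDegree ≤ d ∧ ∀ x, g x = G.eval x

lemma poly_unique (G H : (ZMod p)[X]) (hG : G.natDegree < p) (hH : H.natDegree < p)
    (h : ∀ x, G.eval x = H.eval x) : G = H := by
  have hp := hpF.out
  have : NeZero p := ⟨hp.ne_zero⟩
  apply Polynomial.eq_of_degree_sub_lt_of_eval_finset_eq (s := Finset.univ)
  · rw [Finset.card_univ, ZMod.card]
    refine lt_of_le_of_lt (degree_sub_le G H) ?_
    rw [max_lt_iff]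
    exact ⟨lt_of_le_of_lt degree_le_natDegree (by exact_mod_cast hG),
      lt_of_le_of_lt degree_le_natDegree (by exact_mod_cast hH)⟩
  · intro x _; exact h x

lemma deg_all (g : ZMod p → ZMod p) : Deg g (p - 1) := by
  classical
  have hp := hpF.out
  have : NeZero p := ⟨hp.ne_zero⟩
  refine ⟨Lagrange.interpolate Finset.univ id g, ?_, ?_⟩
  · have := Lagrange.degree_interpolate_le (s := Finset.univ) (v := (id : ZMod p → ZMod p)) g
      (Function.injective_id.injOn)
    rw [Finset.card_univ, ZMod.card] at this
    exact natDegree_le_of_degree_le this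
  · intro x
    have := Lagrange.eval_interpolate_at_node (s := Finset.univ) (v := (id : ZMod p → ZMod p)) g
      (Function.injective_id.injOn) (Finset.mem_univ x)
    exact this.symm

lemma Deg.mono {g : ZMod p → ZMod p} {d d' : ℕ} (h : Deg g d) (hd : d ≤ d') : Deg g d' := by
  obtain ⟨G, h1, h2⟩ := h
  exact ⟨G, h1.trans hd, h2⟩

lemma lemL (q : ZMod p → ZMod p) (n : ℕ) (hn : 1 ≤ n) (hn2 : 2 * n ≤ p - 1)
    (h : ∀ i ≤ n, Deg (fun x => q x ^ i) n) : Deg q 1 := by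
  have hp := hpF.out.two_le
  obtain ⟨Q, hQ, hQq⟩ := h 1 hn
  simp only [pow_one] at hQq
  refine ⟨Q, ?_, hQq⟩
  by_contra hr
  push Not at hr
  set r := Q.natDegree with hrdef
  have hi : n / r + 1 ≤ n := by
    have : n / r ≤ n / 2 := Nat.div_le_div_left hr (by norm_num)
    omega
  obtain ⟨H, hH, hHq⟩ := h (n / r + 1) hi
  have h1 : r * (n / r) ≤ n := Nat.mul_div_le n r
  have h2 : n < r * (n / r + 1) := Nat.lt_mul_div_succ n (by omega)
  have hdeg : (Q ^ (n / r + 1)).natDegree = (n / r + 1) * r := natDegree_pow _ _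
  have h3 : (n / r + 1) * r = r * (n / r) + r := by ring
  have h4 : r * (n / r + 1) = r * (n / r) + r := by ring
  have := poly_unique (Q ^ (n / r + 1)) H (by rw [hdeg]; omega) (by omega) (fun x => by
    rw [← hHq, eval_pow, ← hQq])
  rw [← this, hdeg] at hH
  omega

variable (Φ : ZMod p → ZMod p)

noncomputable def conv [NeZero p] (g : ZMod p → ZMod p) (e : ZMod p) : ZMod p :=
  ∑ f, Φ f * g (f + e)

noncomputable def mom [NeZero p] (k : ℕ) : ZMod p := ∑ f, f ^ k * Φ f

noncomputable def convP [NeZero p] (G : (ZMod p)[X]) : (ZMod p)[X] := ∑ f, C (Φ f) * taylor f G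

lemma convP_eval [NeZero p] (G : (ZMod p)[X]) (e : ZMod p) :
    (convP Φ G).eval e = conv Φ (fun x => G.eval x) e := by
  unfold convP conv
  rw [eval_finsetSum]
  apply Finset.sum_congr rfl
  intro f _
  rw [eval_mul, eval_C, taylor_eval, add_comm]

lemma convP_coeff [NeZero p] (G : (ZMod p)[X]) (n : ℕ) :
    (convP Φ G).coeff n = ∑ k ∈ Finset.range (G.natDegree + 1),
      ((k + n).choose n : ZMod p) * G.coeff (k + n) * mom Φ k := by
  unfold convP mom
  rw [finsetSum_coeff]
  simp_rw [Finset.mul_sum]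
  rw [Finset.sum_comm]
  apply Finset.sum_congr rfl
  intro f _
  rw [coeff_C_mul, taylor_coeff, eval_eq_sum_range' (n := G.natDegree + 1), Finset.mul_sum]
  · apply Finset.sum_congr rfl
    intro k _
    rw [hasseDeriv_coeff]; ring
  · have := natDegree_hasseDeriv_le G n
    omega

lemma convP_natDegree [NeZero p] {κ : ℕ} (hk : ∀ k < κ, mom Φ k = 0) (G : (ZMod p)[X]) :
    (convP Φ G).natDegree ≤ G.natDegree - κ := by
  rw [natDegree_le_iff_coeff_eq_zero]
  intro n hn
  rw [convP_coeff]
  apply Finset.sum_eq_zero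
  intro k _
  by_cases hkk : k < κ
  · rw [hk k hkk, mul_zero]
  · rw [coeff_eq_zero_of_natDegree_lt (by omega)]; ring

lemma convP_eq_zero [NeZero p] {κ : ℕ} (hk : ∀ k < κ, mom Φ k = 0) (G : (ZMod p)[X])
    (hG : G.natDegree < κ) : convP Φ G = 0 := by
  ext n
  rw [convP_coeff, coeff_zero]
  apply Finset.sum_eq_zero
  intro k hkr
  rw [Finset.mem_range] at hkr
  rw [hk k (by omega), mul_zero]

lemma convP_lead [NeZero p] {κ : ℕ} (hk : ∀ k < κ, mom Φ k = 0) (hκ : mom Φ κ ≠ 0) (G : (ZMod p)[X])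
    (hG : κ ≤ G.natDegree) (hGp : G.natDegree < p) (hG0 : G ≠ 0) :
    (convP Φ G).coeff (G.natDegree - κ) ≠ 0 := by
  have hp := hpF.out
  rw [convP_coeff, Finset.sum_eq_single κ]
  · rw [Nat.add_sub_cancel' hG]
    refine mul_ne_zero (mul_ne_zero ?_ ?_) hκ
    · rw [Ne, ZMod.natCast_eq_zero_iff]
      intro hd
      have h1 : G.natDegree.choose (G.natDegree - κ) ∣ (G.natDegree).factorial := by
        rw [← Nat.choose_mul_factorial_mul_factorial (Nat.sub_le G.natDegree κ), mul_assoc]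
        exact dvd_mul_right _ _
      have := (Nat.Prime.dvd_factorial hp).mp (hd.trans h1)
      omega
    · exact leadingCoeff_ne_zero.mpr hG0
  · intro k _ hkne
    by_cases hkk : k < κ
    · rw [hk k hkk, mul_zero]
    · rw [coeff_eq_zero_of_natDegree_lt (by omega)]; ring
  · intro h
    exact absurd (Finset.mem_range.mpr (by omega)) h

lemma deg_of_conv [NeZero p] {κ : ℕ} (hk : ∀ k < κ, mom Φ k = 0) (hκ : mom Φ κ ≠ 0) (hκ1 : 1 ≤ κ)
    (g : ZMod p → ZMod p) (h : ∀ e, conv Φ g e = 0) : Deg g (κ - 1) := by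
  have hp := hpF.out.two_le
  obtain ⟨G, hG, hgG⟩ := deg_all g
  refine ⟨G, ?_, hgG⟩
  by_contra hlt
  have hz : convP Φ G = 0 := by
    apply poly_unique
    · have := convP_natDegree Φ hk G
      omega
    · simp; omega
    · intro x
      rw [convP_eval, eval_zero]
      have : (fun x => G.eval x) = g := by ext x; rw [hgG]
      rw [this, h]
  have hG0 : G ≠ 0 := by
    rintro rfl
    simp at hlt
  have := convP_lead Φ hk hκ G (by omega) (by omega) hG0
  rw [hz] at this
  exact this rfl

lemma conv_deg [NeZero p] {κ : ℕ} (hk : ∀ k < κ, mom Φ k = 0)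
    (g : ZMod p → ZMod p) : Deg (conv Φ g) (p - 1 - κ) := by
  obtain ⟨G, hG, hgG⟩ := deg_all g
  refine ⟨convP Φ G, ?_, fun x => ?_⟩
  · have := convP_natDegree Φ hk G
    omega
  · rw [convP_eval]
    have : (fun x => G.eval x) = g := by ext x; rw [hgG]
    rw [this]

lemma zmod_two_aux : ∀ α : ZMod 2, α ≠ 0 → α ≠ 1 → False := by decide

theorem lemZ (hev : ∀ A, Φ (-A) = Φ A) (hnc : ∃ i j, Φ i ≠ Φ j) (q : ZMod p → ZMod p)
    (hq : Function.Bijective q) (α : ZMod p) (hα0 : α ≠ 0) (hα1 : α ≠ 1)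
    (h : ∀ e f, Φ (q f - q e) = α * Φ (f - e)) : ∃ ρ q0, ∀ x, q x = ρ * x + q0 := by
  classical
  have hp := hpF.out
  have : NeZero p := ⟨hp.ne_zero⟩
  have hp2 : p ≠ 2 := by
    rintro rfl
    exact zmod_two_aux α hα0 hα1
  have hodd : p % 2 = 1 := hp.eq_two_or_odd.resolve_left hp2
  have h2 : (2 : ZMod p) ≠ 0 := by
    intro h2
    have : ((2 : ℕ) : ZMod p) = 0 := by exact_mod_cast h2
    rw [ZMod.natCast_eq_zero_iff] at this
    have := Nat.le_of_dvd (by norm_num) this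
    have := hp.two_le
    omega
  have hcq : ∀ (g : ZMod p → ZMod p) e, conv Φ g (q e) = α * conv Φ (fun x => g (q x)) e := by
    intro g e
    have e1 : ∀ (g : ZMod p → ZMod p) e, conv Φ g e = ∑ f, Φ (f - e) * g f := by
      intro g e
      unfold conv
      refine Fintype.sum_equiv (Equiv.addRight e) _ _ (fun f => ?_)
      simp
    rw [e1, e1, Finset.mul_sum]
    symm
    refine Fintype.sum_bijective q hq _ _ (fun f => ?_)
    rw [h]; ring
  have hmom0 : mom Φ 0 = 0 := by
    have e0 : ∀ e, conv Φ (fun _ => 1) e = mom Φ 0 := by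
      intro e; simp [conv, mom]
    have := hcq (fun _ => 1) 0
    rw [e0, e0] at this
    have h3 : (α - 1) * mom Φ 0 = 0 := by linear_combination -this
    exact (mul_eq_zero.mp h3).resolve_left (sub_ne_zero.mpr hα1)
  have hmomodd : ∀ k, k % 2 = 1 → mom Φ k = 0 := by
    intro k hk
    have : mom Φ k = - mom Φ k := by
      conv_lhs => unfold mom
      rw [← Equiv.sum_comp (Equiv.neg (ZMod p))]
      unfold mom
      rw [← Finset.sum_neg_distrib]
      apply Finset.sum_congr rfl
      intro f _
      rw [Equiv.neg_apply, hev, Odd.neg_pow (Nat.odd_iff.mpr hk)]; ring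
    have h3 : 2 * mom Φ k = 0 := by linear_combination this
    exact (mul_eq_zero.mp h3).resolve_left h2
  have hδ : ∀ e, conv Φ (fun x => if x = 0 then 1 else 0) e = Φ e := by
    intro e
    unfold conv
    rw [Finset.sum_eq_single (-e)]
    · simp [hev]
    · intro b _ hb
      show Φ b * (if b + e = 0 then 1 else 0) = 0
      rw [if_neg, mul_zero]
      intro hbe
      exact hb (eq_neg_of_add_eq_zero_left hbe)
    · simp
  have hex : ∃ k, mom Φ k ≠ 0 := by
    by_contra hall
    push Not at hall
    obtain ⟨i, j, hij⟩ := hnc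
    apply hij
    obtain ⟨G, hG, hgG⟩ := deg_all (p := p) (fun x => if x = 0 then 1 else 0)
    have hz := convP_eq_zero Φ (κ := G.natDegree + 1) (fun k _ => hall k) G (by omega)
    have : ∀ e, Φ e = 0 := by
      intro e
      rw [← hδ]
      have h3 := convP_eval Φ G e
      rw [hz, eval_zero] at h3
      have hfun : (fun x => if x = 0 then (1:ZMod p) else 0) = fun x => G.eval x := by
        ext x; exact hgG x
      rw [hfun]
      exact h3.symm
    rw [this, this]
  have hκ := Nat.find_spec hex
  have hk : ∀ k < Nat.find hex, mom Φ k = 0 := by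
    intro k hk
    by_contra hne
    exact Nat.find_min hex hk hne
  set κ := Nat.find hex with hκdef
  have hκ0 : κ % 2 = 0 := by
    by_contra hne
    exact hκ (hmomodd κ (by omega))
  have hκne : κ ≠ 0 := by
    intro h0
    rw [h0] at hκ
    exact hκ hmom0
  have hκlt : κ < p - 1 := by
    by_contra hge
    obtain ⟨G, hG, hgG⟩ := conv_deg Φ hk (fun x => if x = 0 then 1 else 0)
    have hG0 : G.natDegree = 0 := by omega
    obtain ⟨a, ha⟩ := natDegree_eq_zero.mp hG0
    obtain ⟨i, j, hij⟩ := hnc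
    apply hij
    rw [← hδ, ← hδ, hgG, hgG, ← ha, eval_C, eval_C]
  have hq1 : Deg q 1 := by
    by_cases hcase : 2 * (κ - 1) ≤ p - 1
    · apply lemL q (κ - 1) (by omega) hcase
      intro i hi
      apply deg_of_conv Φ hk hκ (by omega)
      intro e
      have h1 := hcq (fun x => x ^ i) e
      have h2 : conv Φ (fun x => x ^ i) (q e) = 0 := by
        have h3 := convP_eval Φ (X ^ i) (q e)
        rw [convP_eq_zero Φ hk (X ^ i) (by rw [natDegree_X_pow]; omega), eval_zero] at h3
        rw [h3]
        congr 1
        ext x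
        simp
      rw [h2] at h1
      exact (mul_eq_zero.mp h1.symm).resolve_left hα0
    · apply lemL q (p - 1 - κ) (by omega) (by omega)
      intro j
      induction j using Nat.strong_induction_on with
      | _ j ih =>
      intro hj
      have hdeg : (X ^ (κ + j) : (ZMod p)[X]).natDegree = κ + j := natDegree_X_pow _
      set T := convP Φ (X ^ (κ + j)) with hT
      have hTd : T.natDegree ≤ j := by
        have := convP_natDegree Φ hk (X ^ (κ + j))
        rw [hdeg, Nat.add_sub_cancel_left] at this
        exact this
      have hTl : T.coeff j ≠ 0 := by
        have := convP_lead Φ hk hκ (X ^ (κ + j)) (by rw [hdeg]; omega) (by rw [hdeg]; omega)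
          (pow_ne_zero _ X_ne_zero)
        rwa [hdeg, Nat.add_sub_cancel_left] at this
      have hTe : ∀ e, T.eval (q e) = α * conv Φ (fun x => q x ^ (κ + j)) e := by
        intro e
        rw [← hcq (fun x => x ^ (κ + j)), hT, convP_eval]
        congr 1
        ext x
        simp
      obtain ⟨L, hL, hLe⟩ := conv_deg Φ hk (fun x => q x ^ (κ + j))
      have hchoose : ∀ i, ∃ G : (ZMod p)[X], i < j → G.natDegree ≤ p - 1 - κ ∧ ∀ x, q x ^ i = G.eval x := by
        intro i
        by_cases hi : i < j
        · obtain ⟨G, h1, h2⟩ := ih i hi (by omega)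
          exact ⟨G, fun _ => ⟨h1, h2⟩⟩
        · exact ⟨0, fun h => absurd h hi⟩
      choose G hG using hchoose
      refine ⟨C (T.coeff j)⁻¹ * (C α * L - ∑ i ∈ Finset.range j, C (T.coeff i) * G i), ?_, ?_⟩
      · refine (natDegree_C_mul_le _ _).trans ?_
        refine (natDegree_sub_le_of_le ((natDegree_C_mul_le _ _).trans hL)
          (n := p - 1 - κ) ?_).trans (max_self _).le
        apply natDegree_sum_le_of_forall_le
        intro i hi
        exact (natDegree_C_mul_le _ _).trans (hG i (Finset.mem_range.mp hi)).1
      · intro x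
        rw [eval_mul, eval_C, eval_sub, eval_mul, eval_C, ← hLe, ← hTe,
          eval_eq_sum_range' (n := j + 1) (by omega), Finset.sum_range_succ, eval_finsetSum]
        have : ∑ i ∈ Finset.range j, eval x (C (T.coeff i) * G i) =
            ∑ i ∈ Finset.range j, T.coeff i * q x ^ i := by
          apply Finset.sum_congr rfl
          intro i hi
          rw [eval_mul, eval_C, ← (hG i (Finset.mem_range.mp hi)).2]
        rw [this, add_sub_cancel_left, inv_mul_cancel_left₀ hTl]
  obtain ⟨G, hG, hGq⟩ := hq1
  refine ⟨G.coeff 1, G.coeff 0, fun x => ?_⟩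
  rw [hGq, eval_eq_sum_range' (n := 2) (by omega), Finset.sum_range_succ, Finset.sum_range_one]
  ring

end PolyZ
end CycleSet


namespace CycleSet
section FinI
variable {p : ℕ} [hpF : Fact p.Prime]

lemma dec_triv {X : Type*} {D D' E : CycleSet X} (hd : Dec p D D' E) (hE : E.permGroup = ⊥) (u v : X) :
    D.op u v = D'.op u v := by
  rw [hd.op_eq]
  have h1 : E.sigma (D'.op u u) ∈ E.permGroup := E.sigma_mem _
  rw [hE, Subgroup.mem_bot] at h1
  have := congrArg (fun g : Perm X => g (D'.op u v)) h1
  exact this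

lemma norm_trans {X : Type*} [Finite X] (D' E : CycleSet X) (htr : D'.Indecomposable)
    (h : ∀ u v, D'.sigma u * E.sigma v * (D'.sigma u)⁻¹ ∈ E.permGroup) :
    ∀ x y, ∃ g ∈ Subgroup.normalizer (E.permGroup : Set (Perm X)), g x = y := by
  intro x y
  obtain ⟨g, hg, hxy⟩ := htr x y
  refine ⟨g, ?_, hxy⟩
  have : D'.permGroup ≤ Subgroup.normalizer (E.permGroup : Set (Perm X)) := by
    unfold permGroup
    rw [Subgroup.closure_le]
    rintro _ ⟨u, rfl⟩
    exact mem_normalizer_closure _ _ (h u)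
  exact this hg

lemma cardP : Nat.card (ZMod p × ZMod p) = p ^ 2 := by
  rw [Nat.card_prod, Nat.card_zmod, sq]

lemma finI_triv (D D' E : CycleSet (ZMod p × ZMod p)) (hd : Dec p D D' E)
    (F : ZMod p → ZMod p → ZMod p)
    (hop : ∀ a x b y, D'.op (a, x) (b, y) = (b + 1, y + F a b)) (u v : ZMod p × ZMod p) :
    D.op u v = D'.op u v := by
  have : NeZero p := ⟨hpF.out.ne_zero⟩
  have hcol := hd.pres Prod.fst (by rintro ⟨a, x⟩ ⟨b, y⟩; rw [hop])
  have hs : ∀ u u' : ZMod p × ZMod p, u.1 = u'.1 → D'.sigma u = D'.sigma u' := by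
    rintro ⟨a, x⟩ ⟨a', x'⟩ h
    simp only at h
    subst h
    ext1 ⟨b, y⟩
    rw [sigma_apply, sigma_apply, hop, hop]
  apply dec_triv hd
  apply normalP hpF.out cardP _ hd.cop
  apply norm_trans D' E hd.trans
  intro u v
  have h1 := hd.comm u v
  rw [hs (E.op v u) u (hcol v u)] at h1
  rw [← h1, mul_assoc, mul_inv_cancel, mul_one]
  exact E.sigma_mem _

lemma form_one {n : ℕ} [NeZero n] {X : Type*} [Finite X] (C : CycleSet X) (hcard : Nat.card X = n)
    (hind : C.Indecomposable) (g : Perm X) (hg : ∀ u v, C.op u v = g v) :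
    ∃ D : CycleSet (ZMod n), (∀ x y : ZMod n, D.op x y = y + 1) ∧ C.Iso D := by
  have hX : Nonempty X := by
    have : 0 < Nat.card X := by rw [hcard]; exact Nat.pos_of_ne_zero (NeZero.ne n)
    exact (Nat.card_pos_iff.mp this).1
  obtain ⟨x0⟩ := hX
  have hle : C.permGroup ≤ Subgroup.zpowers g := by
    unfold permGroup
    rw [Subgroup.closure_le]
    rintro _ ⟨u, rfl⟩
    have : C.sigma u = g := by ext v; exact hg u v
    rw [this]
    exact Subgroup.mem_zpowers g
  have horb : ∀ x, ∃ k : ℤ, (g ^ k) x0 = x := by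
    intro x
    obtain ⟨h, hh, hx⟩ := hind x0 x
    obtain ⟨k, rfl⟩ := hle hh
    exact ⟨k, hx⟩
  let ε := MulAction.orbitZPowersEquiv g x0
  have hou : ∀ x, x ∈ MulAction.orbit (Subgroup.zpowers g) x0 := by
    intro x
    obtain ⟨k, hk⟩ := horb x
    exact ⟨⟨g ^ k, k, rfl⟩, hk⟩
  have hm : Function.minimalPeriod (g • ·) x0 = n := by
    rw [← hcard, ← Nat.card_zmod (Function.minimalPeriod (g • ·) x0), ← Nat.card_congr ε]
    exact Nat.card_congr (Equiv.subtypeUnivEquiv hou)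
  have hε : ∀ k : ℤ, ((ε.symm k : MulAction.orbit (Subgroup.zpowers g) x0) : X) = (g ^ k) x0 := by
    intro k
    rw [MulAction.orbitZPowersEquiv_symm_apply']
    rfl
  clear_value ε
  generalize Function.minimalPeriod (g • ·) x0 = m at ε hm hε
  subst hm
  let η : X ≃ ZMod m := (Equiv.subtypeUnivEquiv hou).symm.trans ε
  refine ⟨⟨fun _ y => y + 1, fun _ _ _ => rfl, fun _ => (Equiv.addRight 1).bijective,
    (Equiv.addRight 1).bijective⟩, fun _ _ => rfl, ?_⟩
  apply iso_of_eq C η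
  intro x y
  show η (C.op x y) = η y + 1
  rw [hg]
  have hη : ∀ k : ℤ, η.symm k = (g ^ k) x0 := hε
  obtain ⟨k, hk⟩ := horb y
  have h1 : η y = k := by rw [← hk, ← hη]; simp
  have h2 : g y = η.symm ((k + 1 : ℤ)) := by
    rw [hη, ← hk, add_comm, zpow_add]; rfl
  rw [h1, h2]
  simp

lemma finI (D : CycleSet (ZMod p × ZMod p)) (hind : D.Indecomposable)
    (F : ZMod p → ZMod p → ZMod p)
    (hop : ∀ a x b y, D.op (a, x) (b, y) = (b + 1, y + F a b)) :
    (∃ D' : CycleSet (ZMod (p ^ 2)),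
      (∀ x y : ZMod (p ^ 2), D'.op x y = y + 1) ∧ D.Iso D') ∨
    (∃ (Φ : ZMod p → ZMod p) (S : ZMod p),
      (∃ i j : ZMod p, Φ i ≠ Φ j) ∧ Φ 0 = 0 ∧
      ∃ D' : CycleSet (ZMod p × ZMod p),
        (∀ a b x y : ZMod p,
          D'.op (a, x) (b, y) = (b + 1, y + (if b = 0 then S else 0) + Φ (b - a))) ∧
        D.Iso D') := by
  have hz : NeZero p := ⟨hpF.out.ne_zero⟩
  have hz2 : NeZero (p ^ 2) := ⟨pow_ne_zero _ hpF.out.ne_zero⟩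
  have hF : ∀ a b d, F a d + F (b + 1) (d + 1) = F b d + F (a + 1) (d + 1) := by
    intro a b d
    have := D.c1 (a, 0) (b, 0) (d, 0)
    simp only [hop, Prod.mk.injEq] at this
    linear_combination this.2
  let Φ : ZMod p → ZMod p := fun t => F (-t) 0 - F 0 0
  have hFΦ : ∀ a d, F a d = Φ (d - a) + F d d := by
    intro a d
    have := const_of_period (k := fun t => F (a - d + t) t - F t t) (s := 1) one_ne_zero (by
      intro t
      have := hF (a - d + t) t t
      rw [show a - d + (t + 1) = a - d + t + 1 by ring]
      linear_combination -this) d 0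
    simp only [sub_add_cancel, add_zero] at this
    simp only [Φ, neg_sub]
    linear_combination this
  by_cases hΦ : ∃ i j, Φ i ≠ Φ j
  · right
    let ψ : ZMod p → ZMod p := fun b => - ∑ i ∈ Finset.range (b - 1).val, F (i + 1) (i + 1)
    let S : ZMod p := ψ 1 - ψ 0 + F 0 0
    have hψ : ∀ b, ψ (b + 1) - ψ b + F b b = if b = 0 then S else 0 := by
      intro b
      split_ifs with hb
      · subst hb; simp [S]
      · obtain ⟨n, hn⟩ := Nat.exists_eq_succ_of_ne_zero (fun h => hb ((ZMod.val_eq_zero b).mp h))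
        have hnp : n + 1 < p := by rw [← Nat.succ_eq_add_one, ← hn]; exact ZMod.val_lt b
        have hb' : b = ((n + 1 : ℕ) : ZMod p) := by rw [← ZMod.natCast_zmod_val b, hn]
        have h1 : (b + 1 - 1).val = n + 1 := by rw [add_sub_cancel_right, hn]
        have h2 : (b - 1).val = n := by
          rw [hb']; push_cast; rw [add_sub_cancel_right, ZMod.val_natCast_of_lt (by omega)]
        simp only [ψ, h1, h2, Finset.sum_range_succ]
        rw [hb']; push_cast; ring
    refine ⟨Φ, S, hΦ, by simp [Φ], ?_⟩
    let e : ZMod p × ZMod p ≃ ZMod p × ZMod p :=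
      { toFun := fun v => (v.1, v.2 + ψ v.1)
        invFun := fun v => (v.1, v.2 - ψ v.1)
        left_inv := fun v => by simp
        right_inv := fun v => by simp }
    refine ⟨D.tr e, ?_, D.iso_tr e⟩
    intro a b x y
    rw [tr_op]
    show e (D.op (a, x - ψ a) (b, y - ψ b)) = _
    rw [hop]
    show (b + 1, y - ψ b + F a b + ψ (b + 1)) = _
    rw [← hψ, hFΦ]
    ext
    · rfl
    · simp only; ring
  · left
    push Not at hΦ
    apply form_one D cardP hind (D.sigma (0, 0))
    rintro ⟨a, x⟩ ⟨b, y⟩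
    rw [sigma_apply, hop, hop, hFΦ a b, hFΦ 0 b, hΦ (b - a) (b - 0)]

end FinI
end CycleSet


namespace CycleSet
section FinIII
variable {p : ℕ} [hpF : Fact p.Prime]

lemma dec_conj {X : Type*} {D D' E : CycleSet X} (hd : Dec p D D' E) (g : Perm X)
    (hg : g ∈ D'.permGroup) : ∀ v, E.sigma (g v) * g * (E.sigma v)⁻¹ ∈ D'.permGroup := by
  unfold permGroup at hg
  induction hg using Subgroup.closure_induction with
  | mem g hg =>
    obtain ⟨u, rfl⟩ := hg
    intro v
    have := hd.comm u v
    rw [sigma_apply, this, mul_assoc, mul_inv_cancel, mul_one]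
    exact D'.sigma_mem _
  | one => intro v; simp [one_mem]
  | mul g k _ _ hg hk =>
    intro v
    have := mul_mem (hg (k v)) (hk v)
    convert this using 1
    rw [Perm.mul_apply]
    group
  | inv g _ hg =>
    intro w
    have := inv_mem (hg (g⁻¹ w))
    convert this using 1
    rw [show g (g⁻¹ w) = w from g.apply_symm_apply w]
    group

lemma tri_mul {g k : Perm (ZMod p × ZMod p)} {s t : ZMod p} {φ ψ : ZMod p → ZMod p}
    (hg : Tri g s φ) (hk : Tri k t ψ) : Tri (g * k) (t + s) (fun b => ψ b + φ (b + t)) := by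
  intro b y
  rw [Perm.mul_apply, hk, hg]
  ext <;> simp only <;> ring

lemma tri_closure (D' : CycleSet (ZMod p × ZMod p)) (h : ∀ u, ∃ s φ, Tri (D'.sigma u) s φ) :
    ∀ g ∈ D'.permGroup, ∃ s φ, Tri g s φ := by
  intro g hg
  unfold permGroup at hg
  induction hg using Subgroup.closure_induction with
  | mem g hg => obtain ⟨u, rfl⟩ := hg; exact h u
  | one => exact ⟨0, fun _ => 0, fun b y => by simp⟩
  | mul g k _ _ hg hk =>
    obtain ⟨s, φ, hg⟩ := hg
    obtain ⟨t, ψ, hk⟩ := hk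
    exact ⟨_, _, tri_mul hg hk⟩
  | inv g _ hg =>
    obtain ⟨s, φ, hg⟩ := hg
    refine ⟨-s, fun b => - φ (b - s), fun b y => ?_⟩
    rw [Perm.inv_eq_iff_eq, hg]
    ext <;> simp only <;> ring_nf

lemma shift_zero (H : Subgroup (Perm (ZMod p × ZMod p))) (hH : ¬ p ∣ Nat.card H)
    (g : Perm (ZMod p × ZMod p)) (hg : g ∈ H) (t : ZMod p) (h : ∀ w, (g w).1 = w.1 + t) : t = 0 := by
  have hn : ∀ (n : ℕ) w, ((g ^ n) w).1 = w.1 + n * t := by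
    intro n w
    induction n with
    | zero => simp
    | succ n ih => rw [pow_succ', Perm.mul_apply, h, ih]; push_cast; ring
  have h1 : g ^ Nat.card H = 1 := by
    have := pow_card_eq_one' (x := (⟨g, hg⟩ : H))
    exact congrArg Subtype.val this
  have h2 := hn (Nat.card H) (0, 0)
  rw [h1] at h2
  have h3 : ((Nat.card H : ℕ) : ZMod p) * t = 0 := by
    have : (0 : ZMod p) = 0 + (Nat.card H : ℕ) * t := h2
    linear_combination -this
  rcases mul_eq_zero.mp h3 with h4 | h4
  · exact absurd ((ZMod.natCast_eq_zero_iff _ _).mp h4) hH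
  · exact h4

variable (Φ : ZMod p → ZMod p)

lemma tri_mult (D' : CycleSet (ZMod p × ZMod p))
    (hop : ∀ a x b y, D'.op (a, x) (b, y) = (b + x, y + Φ (b - a))) (c a : ZMod p) :
    ∃ g ∈ D'.permGroup, Tri g 0 (fun b => c * Φ (b - a)) := by
  have : NeZero p := ⟨hpF.out.ne_zero⟩
  have hn : ∀ n : ℕ, Tri ((D'.sigma (a, 0)) ^ n) 0 (fun b => (n : ZMod p) * Φ (b - a)) := by
    intro n
    induction n with
    | zero => intro b y; simp
    | succ n ih =>
      intro b y
      rw [pow_succ', Perm.mul_apply, ih, sigma_apply, hop]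
      push_cast
      ext <;> simp only <;> ring_nf
  refine ⟨_, pow_mem (D'.sigma_mem (a, 0)) c.val, ?_⟩
  have := hn c.val
  rwa [ZMod.natCast_zmod_val] at this

lemma sep (D' : CycleSet (ZMod p × ZMod p)) (hnc : ∃ i j, Φ i ≠ Φ j)
    (hop : ∀ a x b y, D'.op (a, x) (b, y) = (b + x, y + Φ (b - a))) (b d : ZMod p) (hbd : d ≠ b) :
    ∃ g ∈ D'.permGroup, ∃ φ, Tri g 0 φ ∧ φ b = 0 ∧ φ d ≠ 0 := by
  by_contra hcon
  push Not at hcon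
  have key : ∀ a a', Φ (b - a') * Φ (d - a) = Φ (b - a) * Φ (d - a') := by
    intro a a'
    obtain ⟨g, hg, hgt⟩ := tri_mult Φ D' hop (Φ (b - a')) a
    obtain ⟨k, hk, hkt⟩ := tri_mult Φ D' hop (- Φ (b - a)) a'
    have := hcon _ (mul_mem hg hk) (fun x => Φ (b - a') * Φ (x - a) - Φ (b - a) * Φ (x - a'))
      (by
        intro x y
        rw [tri_mul hgt hkt]
        ext <;> simp only [add_zero] <;> ring) (by ring)
    linear_combination this
  obtain ⟨i, j, hij⟩ := hnc
  have hne : ∃ i, Φ i ≠ 0 := by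
    by_contra h
    push Not at h
    exact hij (by rw [h, h])
  obtain ⟨i0, hi0⟩ := hne
  apply hij
  apply ratio_const (s := d - b) (r := Φ (d - b + i0) / Φ i0) (sub_ne_zero.mpr hbd)
  intro t
  have := key (b - t) (b - i0)
  rw [show b - (b - i0) = i0 by ring, show b - (b - t) = t by ring,
    show d - (b - t) = t + (d - b) by ring, show d - (b - i0) = d - b + i0 by ring] at this
  field_simp
  linear_combination this

lemma col_aff (D D' E : CycleSet (ZMod p × ZMod p)) (hd : Dec p D D' E) (hnc : ∃ i j, Φ i ≠ Φ j)
    (hop : ∀ a x b y, D'.op (a, x) (b, y) = (b + x, y + Φ (b - a))) (v : ZMod p × ZMod p)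
    (d : ZMod p) (hdv : d ≠ v.1) : ∃ c β μ, ∀ e, E.op v (d, e) = (c, β + μ * e) := by
  have htri := tri_closure D' (fun u => ⟨u.2, fun b => Φ (b - u.1), fun b y => hop _ _ _ _⟩)
  obtain ⟨g, hg, φ, hgt, hb, hφd⟩ := sep Φ D' hnc hop v.1 d hdv
  have hgv : g v = v := by
    obtain ⟨b, y⟩ := v
    rw [hgt]
    simp only at hb
    simp [hb]
  have h1 := dec_conj hd g hg v
  rw [hgv] at h1
  set g' := E.sigma v * g * (E.sigma v)⁻¹ with hg'
  have hcon : ∀ w, E.op v (g w) = g' (E.op v w) := by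
    intro w
    have : E.sigma v * g = g' * E.sigma v := by rw [hg']; group
    exact congrArg (fun k : Perm _ => k w) this
  obtain ⟨s, φ', hg't⟩ := htri g' h1
  have hs : s = 0 := by
    have := hcon v
    rw [hgv] at this
    have h2 := congrArg Prod.fst this
    rw [hg't] at h2
    have h3 : (E.op v v).1 = (E.op v v).1 + s := h2
    linear_combination -h3
  subst hs
  have hstep : ∀ e, E.op v (d, e + φ d) =
      ((E.op v (d, e)).1, (E.op v (d, e)).2 + φ' (E.op v (d, e)).1) := by
    intro e
    have := hcon (d, e)
    rw [hgt, hg't (E.op v (d, e)).1 (E.op v (d, e)).2] at this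
    simpa using this
  have hc : ∀ e, (E.op v (d, e)).1 = (E.op v (d, 0)).1 := by
    intro e
    apply const_of_period (k := fun e => (E.op v (d, e)).1) hφd
    intro a
    simp only [hstep]
  refine ⟨(E.op v (d, 0)).1, (E.op v (d, 0)).2, φ' (E.op v (d, 0)).1 / φ d, fun e => ?_⟩
  have := affine_of_period (c := fun e => (E.op v (d, e)).2) (δ := φ' (E.op v (d, 0)).1) hφd (by
    intro a
    simp only [hstep, hc a]) e
  ext
  · exact hc e
  · exact this

lemma col_col (D D' E : CycleSet (ZMod p × ZMod p)) (hd : Dec p D D' E) (hnc : ∃ i j, Φ i ≠ Φ j)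
    (hop : ∀ a x b y, D'.op (a, x) (b, y) = (b + x, y + Φ (b - a))) (v : ZMod p × ZMod p)
    (d e : ZMod p) : (E.op v (d, e)).1 = (E.op v (d, 0)).1 := by
  have : NeZero p := ⟨hpF.out.ne_zero⟩
  have hinj := (E.c2 v).1
  have hsurj : ∀ d, d ≠ v.1 → ∀ w, w.1 = (E.op v (d, 0)).1 → ∃ e, E.op v (d, e) = w := by
    intro d hdv w hw
    obtain ⟨c, β, μ, h⟩ := col_aff Φ D D' E hd hnc hop v d hdv
    have hμ : μ ≠ 0 := by
      rintro rfl
      have : E.op v (d, 0) = E.op v (d, 1) := by rw [h, h]; simp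
      have := congrArg Prod.snd (hinj this)
      exact zero_ne_one this
    refine ⟨(w.2 - β) / μ, ?_⟩
    rw [h] at hw ⊢
    ext
    · exact hw.symm
    · simp only; field_simp; ring
  by_cases hdv : d = v.1
  · have hci : Function.Injective (fun d => (E.op v (d, 0)).1) := by
      intro d1 d2 h12
      simp only at h12
      by_cases h1 : d1 = v.1
      · by_cases h2 : d2 = v.1
        · rw [h1, h2]
        · obtain ⟨e', he'⟩ := hsurj d2 h2 _ h12
          exact (congrArg Prod.fst (hinj he')).symm
      · obtain ⟨e', he'⟩ := hsurj d1 h1 _ h12.symm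
        exact (congrArg Prod.fst (hinj he'))
    obtain ⟨d', hd'⟩ := (Finite.injective_iff_surjective.mp hci) (E.op v (d, e)).1
    simp only at hd'
    by_cases h' : d' = v.1
    · rw [← hd', h', hdv]
    · obtain ⟨e', he'⟩ := hsurj d' h' _ hd'.symm
      have := congrArg Prod.fst (hinj he')
      exact absurd (this.trans hdv) h'
  · obtain ⟨c, β, μ, h⟩ := col_aff Φ D D' E hd hnc hop v d hdv
    rw [h, h]

lemma E_form (D D' E : CycleSet (ZMod p × ZMod p)) (hd : Dec p D D' E) (hnc : ∃ i j, Φ i ≠ Φ j)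
    (hop : ∀ a x b y, D'.op (a, x) (b, y) = (b + x, y + Φ (b - a))) :
    ∃ (q : ZMod p → ZMod p) (α : ZMod p), Function.Bijective q ∧ α ≠ 0 ∧
      (∀ b y a x, E.op (b, y) (a, x) = (q (a - b) + α * b, α * x)) ∧
      ∀ e f, Φ (q f - q e) = α * Φ (f - e) := by
  have : NeZero p := ⟨hpF.out.ne_zero⟩
  let P : ZMod p × ZMod p → ZMod p → ZMod p := fun v d => (E.op v (d, 0)).1
  let Q : ZMod p × ZMod p → ZMod p → ZMod p → ZMod p := fun v d e => (E.op v (d, e)).2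
  have hE : ∀ v d e, E.op v (d, e) = (P v d, Q v d e) := by
    intro v d e
    ext
    · exact col_col Φ D D' E hd hnc hop v d e
    · rfl
  have hne : ∃ i, Φ i ≠ 0 := by
    obtain ⟨i, j, hij⟩ := hnc
    by_contra h
    push Not at h
    exact hij (by rw [h, h])
  obtain ⟨i0, hi0⟩ := hne
  have hcomm : ∀ a x b y d e, E.op (b + x, y + Φ (b - a)) (d + x, e + Φ (d - a)) =
      (P (b, y) d + Q (b, y) a x, Q (b, y) d e + Φ (P (b, y) d - P (b, y) a)) := by
    intro a x b y d e
    have := congrArg (fun k : Perm _ => k (d, e)) (hd.comm (a, x) (b, y))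
    simp only [Perm.mul_apply, sigma_apply] at this
    rw [hop, hop, hE (b, y) a x, hE (b, y) d e, hop] at this
    exact this
  have hc1 : ∀ a x b y d, P (b + x, y + Φ (b - a)) (d + x) = P (b, y) d + Q (b, y) a x := by
    intro a x b y d
    have := congrArg Prod.fst (hcomm a x b y d 0)
    rwa [hE] at this
  have hQ0 : ∀ v a, Q v a 0 = 0 := by
    rintro ⟨b, y⟩ a
    have hmem : E.sigma (b, y + Φ (b - a)) * (E.sigma (b, y))⁻¹ ∈ E.permGroup :=
      mul_mem (E.sigma_mem _) (inv_mem (E.sigma_mem _))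
    apply shift_zero _ hd.cop _ hmem
    intro w
    obtain ⟨⟨d, e⟩, rfl⟩ := (E.sigma (b, y)).surjective w
    rw [Perm.mul_apply, show ∀ k : Perm (ZMod p × ZMod p), ∀ w, k⁻¹ (k w) = w from
      fun k w => k.symm_apply_apply w, sigma_apply, sigma_apply, hE, hE]
    have := hc1 a 0 b y d
    simpa using this
  have hPy : ∀ b y d, P (b, y) d = P (b, 0) d := by
    intro b y d
    apply const_of_period (k := fun y => P (b, y) d) hi0
    intro y
    have := hc1 (b - i0) 0 b y d
    simpa [hQ0] using this
  have hc2 : ∀ a x b y d, P (b + x, 0) (d + x) = P (b, 0) d + Q (b, y) a x := by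
    intro a x b y d
    rw [← hPy _ (y + Φ (b - a)), hc1, hPy b y]
  have hlin : ∀ b y a x, Q (b, y) a x = Q (b, 0) b 1 * x := by
    intro b y a x
    have h1 := hc2 a x b y 0
    have h2 := hc2 (b + 1) x b 0 0
    have h3 := hc2 b 1 b 0 0
    have h4 := hc2 (b + 1) 1 b 0 0
    obtain ⟨c, β, μ, h⟩ := col_aff Φ D D' E hd hnc hop (b, 0) (b + 1) (by simp)
    have hq : ∀ x, Q (b, 0) (b + 1) x = β + μ * x := fun x => congrArg Prod.snd (h x)
    have h0 := hQ0 (b, 0) (b + 1)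
    rw [hq] at h0 h2 h4
    linear_combination h2 - h1 - x * (h4 - h3) + (1 - x) * h0
  have hα : ∀ b, Q (b, 0) b 1 = Q (0, 0) 0 1 := by
    intro b
    have h1 := hc2 0 b 0 0 0
    have h2 := hc2 0 1 b 0 b
    have h3 := hc2 0 (b + 1) 0 0 0
    rw [hlin] at h1 h2 h3
    simp only [zero_add] at h1 h2 h3
    linear_combination h3 - h1 - h2
  set α := Q (0, 0) 0 1 with hαdef
  have hQ : ∀ b y a x, Q (b, y) a x = α * x := by
    intro b y a x
    rw [hlin, hα]
  have hPb : ∀ b y d, P (b, y) d = P (0, 0) (d - b) + α * b := by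
    intro b y d
    have := hc2 0 b 0 0 (d - b)
    rw [hQ] at this
    simpa [← hPy b y] using this
  have hα0 : α ≠ 0 := by
    intro h0
    have : E.op (0, 0) (0, 0) = E.op (0, 0) (0, 1) := by
      rw [hE, hE, hQ, hQ, h0]; simp
    have := congrArg Prod.snd ((E.c2 _).1 this)
    exact zero_ne_one this
  refine ⟨P (0, 0), α, ?_, hα0, ?_, ?_⟩
  · apply Finite.injective_iff_bijective.mp
    intro d1 d2 h
    have : E.op (0, 0) (d1, 0) = E.op (0, 0) (d2, 0) := by
      rw [hE, hE, hQ, hQ, h]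
    exact congrArg Prod.fst ((E.c2 _).1 this)
  · intro b y a x
    rw [hE, hQ, hPb]
  · intro a d
    have := congrArg Prod.snd (hcomm a 0 0 0 d 0)
    rw [hE, hQ] at this
    simp only [hQ] at this
    linear_combination -this

theorem finIII (D D' E : CycleSet (ZMod p × ZMod p)) (hd : Dec p D D' E) (hnc : ∃ i j, Φ i ≠ Φ j)
    (hev : ∀ A, Φ (-A) = Φ A)
    (hop : ∀ a x b y, D'.op (a, x) (b, y) = (b + x, y + Φ (b - a))) :
    ∃ α : ZMod p, α ≠ 0 ∧ (∀ A : ZMod p, Φ (α * A) = α * Φ A) ∧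
      ∃ D'' : CycleSet (ZMod p × ZMod p),
        (∀ a b x y : ZMod p,
          D''.op (a, x) (b, y) = (α * b + α * x, α * y + α * Φ (b - a))) ∧
        D.Iso D'' := by
  have : NeZero p := ⟨hpF.out.ne_zero⟩
  obtain ⟨q, α, hq, hα0, hE, hqΦ⟩ := E_form Φ D D' E hd hnc hop
  by_cases hα1 : α = 1
  · subst hα1
    have hbot : E.permGroup = ⊥ := by
      apply normalP hpF.out cardP _ hd.cop
      intro x y
      refine ⟨Equiv.addRight (y - x), ?_, by simp⟩
      apply mem_normalizer_closure
      intro v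
      have : Equiv.addRight (y - x) * E.sigma v * (Equiv.addRight (y - x))⁻¹ =
          E.sigma (v + (y - x)) := by
        rw [mul_inv_eq_iff_eq_mul]
        ext1 ⟨a, c⟩
        obtain ⟨s, t⟩ : ZMod p × ZMod p := y - x
        obtain ⟨b, z⟩ := v
        simp only [Perm.mul_apply, sigma_apply, hE, Equiv.coe_addRight, Prod.mk_add_mk]
        ext
        · simp only; rw [show a + s - (b + s) = a - b by ring]; ring
        · simp only; ring
      rw [this]
      exact Subgroup.subset_closure ⟨_, rfl⟩
    refine ⟨1, one_ne_zero, by simp, D, ?_, id, Function.bijective_id, fun _ _ => rfl⟩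
    intro a b x y
    rw [dec_triv hd hbot, hop]
    simp
  · obtain ⟨ρ, q0, hρ⟩ := lemZ Φ hev hnc q hq α hα0 hα1 hqΦ
    have hρα : ρ = α := by
      have hmem : E.sigma (1, 0) * (E.sigma (0, 0))⁻¹ ∈ E.permGroup :=
        mul_mem (E.sigma_mem _) (inv_mem (E.sigma_mem _))
      have := shift_zero _ hd.cop _ hmem (α - ρ) (by
        intro w
        obtain ⟨⟨d, e⟩, rfl⟩ := (E.sigma (0, 0)).surjective w
        rw [Perm.mul_apply, show ∀ k : Perm (ZMod p × ZMod p), ∀ w, k⁻¹ (k w) = w from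
      fun k w => k.symm_apply_apply w, sigma_apply, sigma_apply, hE, hE]
        simp only [hρ]
        ring)
      linear_combination -this
    subst hρα
    have hα1' : 1 - ρ ≠ 0 := sub_ne_zero.mpr (Ne.symm hα1)
    let c : ZMod p := q0 / (1 - ρ)
    have hc : ρ * c + q0 = c := by
      simp only [c]; field_simp; ring
    have hD : ∀ a x b y, D.op (a, x) (b, y) = (ρ * b + ρ * x + q0, ρ * y + ρ * Φ (b - a)) := by
      intro a x b y
      rw [hd.op_eq, hop, hop, hE, hρ]
      ext <;> simp only <;> ring
    refine ⟨ρ, hα0, ?_, ?_⟩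
    · intro A
      have := hqΦ 0 A
      rw [hρ, hρ, sub_zero] at this
      rw [← this]
      congr 1; ring
    · let e : ZMod p × ZMod p ≃ ZMod p × ZMod p :=
        { toFun := fun v => (v.1 - c, v.2)
          invFun := fun v => (v.1 + c, v.2)
          left_inv := fun v => by simp
          right_inv := fun v => by simp }
      refine ⟨D.tr e, ?_, D.iso_tr e⟩
      intro a b x y
      rw [tr_op]
      show e (D.op (a + c, x) (b + c, y)) = _
      rw [hD]
      show (ρ * (b + c) + ρ * x + q0 - c, ρ * y + ρ * Φ (b + c - (a + c))) = _
      rw [add_sub_add_right_eq_sub]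
      ext
      · simp only; linear_combination hc
      · rfl

end FinIII
end CycleSet


theorem stmt17 {p : ℕ} (hp : p.Prime) {X : Type} (C : CycleSet X)
    (hcard : Nat.card X = p ^ 2) (hind : C.Indecomposable) :
    (∃ D : CycleSet (ZMod (p ^ 2)),
      (∀ x y : ZMod (p ^ 2), D.op x y = y + 1) ∧ C.Iso D) ∨
    (∃ (Φ : ZMod p → ZMod p) (S : ZMod p),
      (∃ i j : ZMod p, Φ i ≠ Φ j) ∧ Φ 0 = 0 ∧
      ∃ D : CycleSet (ZMod p × ZMod p),
        (∀ a b x y : ZMod p,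
          D.op (a, x) (b, y) = (b + 1, y + (if b = 0 then S else 0) + Φ (b - a))) ∧
        C.Iso D) ∨
    (∃ (Φ : ZMod p → ZMod p) (α : ZMod p),
      (∃ i j : ZMod p, Φ i ≠ Φ j) ∧ (∀ A : ZMod p, Φ (-A) = Φ A) ∧
      α ≠ 0 ∧ (∀ A : ZMod p, Φ (α * A) = α * Φ A) ∧
      ∃ D : CycleSet (ZMod p × ZMod p),
        (∀ a b x y : ZMod p,
          D.op (a, x) (b, y) = (α * b + α * x, α * y + α * Φ (b - a))) ∧
        C.Iso D) := by
  have hF : Fact p.Prime := ⟨hp⟩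
  have hfin : Finite X := Nat.finite_of_card_ne_zero (by
    rw [hcard]; exact pow_ne_zero _ hp.ne_zero)
  obtain ⟨C', E, hd⟩ := CycleSet.exists_dec (p := p) C hcard hind
  rcases CycleSet.thmPG C' hcard hd.pgr hd.trans with ⟨f, hf⟩ | ⟨e, Ψ, hnc, hev, hop⟩
  · obtain ⟨e, F, -, hop⟩ := CycleSet.lemI C' hcard hd.pgr hd.trans f hf
    have hop' : ∀ a x b y, (C.tr e).op (a, x) (b, y) = (b + 1, y + F a b) := by
      intro a x b y
      rw [CycleSet.finI_triv _ _ _ (hd.tr e) F hop, hop]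
    rcases CycleSet.finI (C.tr e) (C.tr_ind e hind) F hop' with
      ⟨D, h1, h2⟩ | ⟨Φ, S, h1, h2, D, h3, h4⟩
    · exact Or.inl ⟨D, h1, (C.iso_tr e).trans' h2⟩
    · exact Or.inr (Or.inl ⟨Φ, S, h1, h2, D, h3, (C.iso_tr e).trans' h4⟩)
  · obtain ⟨α, h1, h2, D, h3, h4⟩ := CycleSet.finIII Ψ _ _ _ (hd.tr e) hnc hev hop
    exact Or.inr (Or.inr ⟨Ψ, α, hnc, hev, h1, h2, D, h3, (C.iso_tr e).trans' h4⟩)
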